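/- arXiv:2206.02007 — 6 statements merged into one kernel-verified Lean document; each statement's English description precedes it below -/
import Mathlib

section
/- Fix n ≥ 2 and any reachable terminal configuration of labeled chip-firing with chips 1, …, 2^n − 1. For every node i with level(i) ≤ n − 1, the chip at node 2^{n−1−level(i)}·i (the straight left descendant of i on level n − 1, which is the parent of a bottom node) has the smallest label among all chips held by nodes of the subtree of i on levels at most n − 1 (i.e., excluding the bottom level n); symmetrically, the chip at node 2^{n−1−level(i)}·(i+1) − 1 has the largest label among all chips held by nodes of the subtree of i on levels at most n − 1. -/
/-!
The total number of firings of each node is forced: a node on level `n - j` fires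
`2 ^ (j + 1) - j - 2` times. Measuring time at a node by the number `s` of firings it still has to
make, the chip count of a node is a discrete Laplacian of `s` (`Run.cnt_eq`); from this one gets
`s ≥ 0` throughout and `s = 0` at the end (`Run.s_nonneg`, `Run.s_final`).

Near the end the process is rigid (`Run.window`, `Run.rigid`): when `v` fires with `r` firings left
and `level v + r ≤ n`, it holds exactly three chips, its parent has exactly `r` firings left and
its children exactly `r - 1`. In particular no chip stays behind at `v` during such a firing.

Let `ℓ` be the left-most descendant of `i` on level `n - 1` and suppose that its final chip `x` is
larger than the label `y`. Call the labels at most `y` zeros. Going up the chain of left children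
that ends in `ℓ`, induction on the height `k` of a node `v` above `ℓ` shows that `v` holds no zero
while it has `k` firings left (`Run.noZero_up`), and that at most one of its earlier firings
involves a zero (`Run.atMostOne_up`): a zero returned by the left child of `v` would make `v` send
it a second one. At the top of the chain, which is the root or a right child, no zero comes back
(`Run.noZero_top`): each child's subtree contains at most one zero, so a child never returns one,
and the parent sends down the largest chip of a triple containing a non-zero. Hence the remaining
zeros in this subtree only move downwards, and end on the bottom level `n`
(`Run.noZero_subtree`). So `y` is not on a level at most `n - 1` in the subtree of `i`
(`Run.final`).

The second half of the statement is the mirror image; the structure `Run` covers both at once.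
-/

/-- The level of node `i` in the infinite binary tree: `⌊log₂ i⌋ + 1`. -/
def level (i : ℕ) : ℕ := Nat.log 2 i + 1

/-- The parent of node `i`; the root (node 1) is its own parent via the self-loop. -/
def parent (i : ℕ) : ℕ := if i = 1 then 1 else i / 2

/-- A labeled configuration records, for each chip label, the node currently holding it. -/
abbrev LConfig := ℕ → ℕ

/-- A firing move: the node fired together with the three chosen chip labels
`a < b < c` (smallest, middle, largest). -/
abbrev Move := ℕ × ℕ × ℕ × ℕ

/-- Firing chips `a < b < c` at node `i`: the smallest chip `a` goes to the left child `2i`,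
the largest chip `c` goes to the right child `2i + 1`, and the middle chip `b` goes to the
parent (back to the root via the self-loop when `i = 1`). -/
def LFire (i a b c : ℕ) (f : LConfig) : LConfig := fun x =>
  if x = a then 2 * i else if x = b then parent i else if x = c then 2 * i + 1 else f x

/-- Applying a sequence of labeled firing moves. -/
def LFireSeq : List Move → LConfig → LConfig
  | [], f => f
  | (i, a, b, c) :: l, f => LFireSeq l (LFire i a b c f)

/-- A sequence of labeled firing moves is legal (for chips labeled `1, …, M`) if at each step
the fired node is a positive integer and the three chosen chips `a < b < c` are labels in
`{1, …, M}` all currently located at that node. -/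
def LLegalSeq (M : ℕ) : List Move → LConfig → Prop
  | [], _ => True
  | (i, a, b, c) :: l, f => 1 ≤ i ∧ 1 ≤ a ∧ c ≤ M ∧ a < b ∧ b < c ∧
      f a = i ∧ f b = i ∧ f c = i ∧ LLegalSeq M l (LFire i a b c f)

/-- The set of chips (among labels `1, …, M`) held by node `v`. -/
def chipsAt (M : ℕ) (f : LConfig) (v : ℕ) : Finset ℕ :=
  (Finset.Icc 1 M).filter (fun x => f x = v)

/-- A labeled configuration is terminal if every node holds at most 2 chips. -/
def LTerminal (M : ℕ) (f : LConfig) : Prop := ∀ v, 1 ≤ v → (chipsAt M f v).card ≤ 2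

/-- A labeled configuration is reachable if some finite sequence of legal firings from the
initial configuration (all chips `1, …, M` at the root) produces it. -/
def LReachable (M : ℕ) (f : LConfig) : Prop :=
  ∃ l, LLegalSeq M l (fun _ => 1) ∧ f = LFireSeq l (fun _ => 1)

/-- Node `j` lies in the subtree of node `i` iff `⌊j / 2^t⌋ = i` for some `t ≥ 0`. -/
def inSubtree (i j : ℕ) : Prop := ∃ t, j / 2 ^ t = i

/-! ### The tree -/

lemma level_double (v : ℕ) (hv : 1 ≤ v) : level (2 * v) = level v + 1 := by
  unfold level
  rw [mul_comm, Nat.log_mul_base (by norm_num) (by omega)]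

lemma level_double_add_one (v : ℕ) (hv : 1 ≤ v) : level (2 * v + 1) = level v + 1 := by
  have h : Nat.log 2 (2 * v + 1) = Nat.log 2 ((2 * v + 1) / 2) + 1 :=
    Nat.log_of_one_lt_of_le (by norm_num) (by omega)
  unfold level
  rw [h, show (2 * v + 1) / 2 = v by omega]

lemma one_le_level (v : ℕ) : 1 ≤ level v := by unfold level; omega

lemma level_one : level 1 = 1 := by simp [level]

lemma parent_of_two_le (v : ℕ) (hv : 2 ≤ v) : parent v = v / 2 := by
  unfold parent; rw [if_neg (by omega)]

lemma parent_one : parent 1 = 1 := by simp [parent]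

lemma level_parent (v : ℕ) (hv : 2 ≤ v) : level v = level (parent v) + 1 := by
  rw [parent_of_two_le v hv]
  rcases Nat.even_or_odd' v with ⟨w, rfl | rfl⟩
  · rw [level_double w (by omega)]; congr 2; omega
  · rw [level_double_add_one w (by omega)]; congr 2; omega

lemma one_le_parent (v : ℕ) (hv : 1 ≤ v) : 1 ≤ parent v := by
  unfold parent; split_ifs <;> omega

lemma inSubtree_refl (i : ℕ) : inSubtree i i := ⟨0, by simp⟩

lemma inSubtree_half {i j : ℕ} (h : inSubtree i j) (hne : j ≠ i) : inSubtree i (j / 2) := by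
  obtain ⟨t, ht⟩ := h
  cases t with
  | zero => simp at ht; omega
  | succ t => exact ⟨t, by rw [Nat.div_div_eq_div_mul, ← pow_succ', ht]⟩

lemma inSubtree_of_half {i j : ℕ} (h : inSubtree i (j / 2)) : inSubtree i j := by
  obtain ⟨t, ht⟩ := h
  exact ⟨t + 1, by rw [pow_succ', ← Nat.div_div_eq_div_mul, ht]⟩

lemma inSubtree_le {i j : ℕ} (h : inSubtree i j) : i ≤ j := by
  obtain ⟨t, rfl⟩ := h
  exact Nat.div_le_self _ _

lemma inSubtree_trans {i j k : ℕ} (h : inSubtree i j) (h' : inSubtree j k) :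
    inSubtree i k := by
  obtain ⟨t, rfl⟩ := h
  obtain ⟨t', rfl⟩ := h'
  exact ⟨t' + t, by rw [pow_add, Nat.div_div_eq_div_mul]⟩

/-! ### Runs -/

/-- A complete terminating run of the chip-firing process with `2 ^ n - 1` chips, coloured by a
set `Z` of zeros. At time `t < T` node `nd t` fires, chip `lo t` going to the child `L (nd t)`,
chip `md t` to the parent and chip `hi t` to the child `R (nd t)`; `F t` is the configuration at
time `t`. The set `Z` is only required to be consistent with the order of the fired triples.
Since `(L, R)` may be either (left, right) or (right, left), a run and its mirror image are
covered by the same definition: `Z` is a lower set of labels in the first case and an upper set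
in the second. -/
structure Run (n : ℕ) where
  hn : 2 ≤ n
  L : ℕ → ℕ
  R : ℕ → ℕ
  F : ℕ → ℕ → ℕ
  nd : ℕ → ℕ
  lo : ℕ → ℕ
  md : ℕ → ℕ
  hi : ℕ → ℕ
  T : ℕ
  Z : ℕ → Prop
  hLR : (∀ v, L v = 2 * v ∧ R v = 2 * v + 1) ∨ (∀ v, L v = 2 * v + 1 ∧ R v = 2 * v)
  init : ∀ x, F 0 x = 1
  nd_pos : ∀ t < T, 1 ≤ nd t
  lo_mem : ∀ t < T, lo t ∈ Finset.Icc 1 (2 ^ n - 1)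
  md_mem : ∀ t < T, md t ∈ Finset.Icc 1 (2 ^ n - 1)
  hi_mem : ∀ t < T, hi t ∈ Finset.Icc 1 (2 ^ n - 1)
  lo_ne_md : ∀ t < T, lo t ≠ md t
  lo_ne_hi : ∀ t < T, lo t ≠ hi t
  md_ne_hi : ∀ t < T, md t ≠ hi t
  F_lo : ∀ t < T, F t (lo t) = nd t
  F_md : ∀ t < T, F t (md t) = nd t
  F_hi : ∀ t < T, F t (hi t) = nd t
  step : ∀ t < T, ∀ x, F (t + 1) x =
    if x = lo t then L (nd t) else if x = md t then parent (nd t)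
    else if x = hi t then R (nd t) else F t x
  term : ∀ v, 1 ≤ v → (chipsAt (2 ^ n - 1) (F T) v).card ≤ 2
  Z_mem : ∀ x, Z x → x ∈ Finset.Icc 1 (2 ^ n - 1)
  Z_md : ∀ t < T, Z (md t) → Z (lo t)
  Z_hi : ∀ t < T, Z (hi t) → Z (md t)

/-- The number of times node `v` fires in a complete run: `2 ^ (j + 1) - j - 2` with
`j = n - level v`, and `0` below level `n`. -/
def total (n v : ℕ) : ℤ :=
  if level v ≤ n then 2 ^ (n - level v + 1) - ((n - level v : ℕ) : ℤ) - 2 else 0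

namespace Run

variable {n : ℕ} (ρ : Run n)

/-- `ρ.s t v` is `total n v` minus the number of firings of `v` before time `t`. It turns out to
be the number of firings of `v` still to come. -/
def s : ℕ → ℕ → ℤ
  | 0, v => total n v
  | t + 1, v => s t v - if ρ.nd t = v then 1 else 0

lemma s_succ_self (t : ℕ) : ρ.s (t + 1) (ρ.nd t) = ρ.s t (ρ.nd t) - 1 := by simp [s]

lemma s_succ_ne (t v : ℕ) (h : ρ.nd t ≠ v) : ρ.s (t + 1) v = ρ.s t v := by simp [s, h]

lemma s_succ (t v : ℕ) : ρ.s (t + 1) v = ρ.s t v - if ρ.nd t = v then 1 else 0 := rfl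

lemma s_succ_le (t v : ℕ) : ρ.s (t + 1) v ≤ ρ.s t v := by
  rw [s_succ]; split_ifs <;> omega

lemma s_anti {t t' : ℕ} (h : t ≤ t') (v : ℕ) : ρ.s t' v ≤ ρ.s t v := by
  induction t', h using Nat.le_induction with
  | base => exact le_rfl
  | succ t' _ ih => exact (ρ.s_succ_le t' v).trans ih

lemma L_cases (v : ℕ) : (ρ.L v = 2 * v ∧ ρ.R v = 2 * v + 1) ∨
    (ρ.L v = 2 * v + 1 ∧ ρ.R v = 2 * v) := by
  rcases ρ.hLR with h | h
  · exact Or.inl (h v)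
  · exact Or.inr (h v)

/-- The number of chips at node `v` at time `t`. -/
def cnt (t v : ℕ) : ℤ := ((chipsAt (2 ^ n - 1) (ρ.F t) v).card : ℤ)

lemma cnt_eq_sum (t v : ℕ) :
    ρ.cnt t v = ∑ x ∈ Finset.Icc 1 (2 ^ n - 1), if ρ.F t x = v then (1 : ℤ) else 0 := by
  unfold cnt chipsAt
  rw [Finset.card_filter]; push_cast; rfl

lemma cnt_succ (t : ℕ) (ht : t < ρ.T) (v : ℕ) :
    ρ.cnt (t + 1) v = ρ.cnt t v - 3 * (if ρ.nd t = v then 1 else 0)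
      + (if 2 * ρ.nd t = v then 1 else 0) + (if 2 * ρ.nd t + 1 = v then 1 else 0)
      + (if parent (ρ.nd t) = v then 1 else 0) := by
  have key : ∀ x ∈ Finset.Icc 1 (2 ^ n - 1), (if ρ.F (t + 1) x = v then (1 : ℤ) else 0) =
      (if ρ.F t x = v then (1 : ℤ) else 0)
      + (if x = ρ.lo t then
          ((if ρ.L (ρ.nd t) = v then 1 else 0) - (if ρ.nd t = v then 1 else 0)) else 0)
      + (if x = ρ.md t then
          ((if parent (ρ.nd t) = v then 1 else 0) - (if ρ.nd t = v then 1 else 0)) else 0)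
      + (if x = ρ.hi t then
          ((if ρ.R (ρ.nd t) = v then 1 else 0) - (if ρ.nd t = v then 1 else 0)) else 0) := by
    intro x _
    rw [ρ.step t ht x]
    have h1 := ρ.F_lo t ht
    have h2 := ρ.F_md t ht
    have h3 := ρ.F_hi t ht
    have d1 := ρ.lo_ne_md t ht
    have d2 := ρ.lo_ne_hi t ht
    have d3 := ρ.md_ne_hi t ht
    by_cases e1 : x = ρ.lo t
    · subst e1; simp [h1, d1, d2]
    · by_cases e2 : x = ρ.md t
      · subst e2; simp [h2, d1.symm, d3]
      · by_cases e3 : x = ρ.hi t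
        · subst e3; simp [h3, d2.symm, d3.symm]
        · simp [e1, e2, e3]
  rw [cnt_eq_sum, cnt_eq_sum, Finset.sum_congr rfl key, Finset.sum_add_distrib,
    Finset.sum_add_distrib, Finset.sum_add_distrib, Finset.sum_ite_eq', Finset.sum_ite_eq',
    Finset.sum_ite_eq', if_pos (ρ.lo_mem t ht), if_pos (ρ.md_mem t ht), if_pos (ρ.hi_mem t ht)]
  rcases ρ.L_cases (ρ.nd t) with ⟨h, h'⟩ | ⟨h, h'⟩ <;> rw [h, h'] <;> ring

/-- The chip count in terms of remaining firings, the discrete Laplacian identity read backwards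
from the configuration with one chip on each node of levels `1, …, n`. The self-loop at the root
is accounted for by `parent 1 = 1`. -/
lemma cnt_eq (t : ℕ) (ht : t ≤ ρ.T) (v : ℕ) (hv : 1 ≤ v) :
    ρ.cnt t v = (if level v ≤ n then 1 else 0) + 3 * ρ.s t v - ρ.s t (parent v)
      - ρ.s t (2 * v) - ρ.s t (2 * v + 1) := by
  induction t with
  | zero =>
    have hn := ρ.hn
    have hc : ρ.cnt 0 v = if v = 1 then 2 ^ n - 1 else 0 := by
      rw [cnt_eq_sum]
      simp only [ρ.init]
      by_cases h : v = 1
      · have : 1 ≤ 2 ^ n := Nat.one_le_two_pow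
        simp [h]
      · simp [h, Ne.symm h]
    rw [hc]
    simp only [s, total, level_double v hv, level_double_add_one v hv]
    by_cases h : v = 1
    · subst h
      obtain ⟨k, rfl⟩ := Nat.exists_eq_add_of_le hn
      have e1 : 2 + k - 1 = k + 1 := by omega
      have e2 : 2 + k - (1 + 1) = k := by omega
      rw [parent_one, level_one, e1, e2]
      simp only [if_true, show 1 ≤ 2 + k by omega, show 1 + 1 ≤ 2 + k by omega]
      push_cast
      ring
    · have hp := level_parent v (by omega)
      rw [if_neg h, hp]
      generalize level (parent v) = p
      by_cases h1 : p + 1 + 1 ≤ n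
      · obtain ⟨k, rfl⟩ := Nat.exists_eq_add_of_le h1
        have e1 : p + 1 + 1 + k - (p + 1) = k + 1 := by omega
        have e2 : p + 1 + 1 + k - p = k + 2 := by omega
        have e3 : p + 1 + 1 + k - (p + 1 + 1) = k := by omega
        rw [e1, e2, e3]
        simp only [if_true, show p + 1 ≤ p + 1 + 1 + k by omega, show p ≤ p + 1 + 1 + k by omega,
          show p + 1 + 1 ≤ p + 1 + 1 + k by omega]
        push_cast
        ring
      · by_cases h2 : p + 1 = n
        · subst h2; simp
        · by_cases h3 : p = n
          · subst h3; simp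
          · simp [show ¬ p ≤ n by omega, show ¬ p + 1 ≤ n by omega, h1]
  | succ t ih =>
    have ih := ih (by omega)
    have hj := ρ.nd_pos t (by omega)
    rw [ρ.cnt_succ t (by omega), ih]
    simp only [s_succ]
    generalize ρ.nd t = j at *
    have key : (if 2 * j = v then (1 : ℤ) else 0) + (if 2 * j + 1 = v then 1 else 0)
        + (if parent j = v then 1 else 0) = (if j = parent v then 1 else 0)
        + (if j = 2 * v then 1 else 0) + (if j = 2 * v + 1 then 1 else 0) := by
      unfold parent
      split_ifs <;> omega
    linarith

/-! ### Remaining firings -/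

lemma triple_subset (t : ℕ) (ht : t < ρ.T) : ({ρ.lo t, ρ.md t, ρ.hi t} : Finset ℕ) ⊆
    chipsAt (2 ^ n - 1) (ρ.F t) (ρ.nd t) := by
  intro x hx
  simp only [Finset.mem_insert, Finset.mem_singleton] at hx
  unfold chipsAt
  rw [Finset.mem_filter]
  rcases hx with rfl | rfl | rfl
  · exact ⟨ρ.lo_mem t ht, ρ.F_lo t ht⟩
  · exact ⟨ρ.md_mem t ht, ρ.F_md t ht⟩
  · exact ⟨ρ.hi_mem t ht, ρ.F_hi t ht⟩

lemma triple_card (t : ℕ) (ht : t < ρ.T) :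
    ({ρ.lo t, ρ.md t, ρ.hi t} : Finset ℕ).card = 3 :=
  Finset.card_eq_three.2 ⟨_, _, _, ρ.lo_ne_md t ht, ρ.lo_ne_hi t ht, ρ.md_ne_hi t ht, rfl⟩

lemma three_le_cnt (t : ℕ) (ht : t < ρ.T) : 3 ≤ ρ.cnt t (ρ.nd t) := by
  have h1 := ρ.triple_card t ht
  have h2 := Finset.card_le_card (ρ.triple_subset t ht)
  unfold cnt
  omega

lemma level_le_total (v : ℕ) : (n : ℤ) ≤ total n v + level v := by
  unfold total
  split_ifs with h
  · have : n - level v + 1 ≤ 2 ^ (n - level v) := Nat.lt_two_pow_self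
    zify at this
    rw [pow_succ]
    push_cast [h] at *
    linarith
  · omega

lemma total_of_le (v : ℕ) (h : n ≤ level v) : total n v = 0 := by
  unfold total
  split_ifs with h'
  · rw [show n - level v = 0 by omega]; norm_num
  · rfl

lemma total_nonneg (v : ℕ) : 0 ≤ total n v := by
  by_cases h : n ≤ level v
  · rw [total_of_le v h]
  · have := level_le_total (n := n) v
    omega

/-- No node fires more than `total n v` times (the least action principle). -/
lemma s_nonneg (t : ℕ) (ht : t ≤ ρ.T) (v : ℕ) : 0 ≤ ρ.s t v := by
  induction t generalizing v with
  | zero => exact total_nonneg v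
  | succ t ih =>
    have ih := ih (by omega)
    by_cases h : ρ.nd t = v
    · subst h
      have h1 := ρ.three_le_cnt t (by omega)
      rw [ρ.cnt_eq t (by omega) _ (ρ.nd_pos t (by omega))] at h1
      have := ih (parent (ρ.nd t))
      have := ih (2 * (ρ.nd t))
      have := ih (2 * (ρ.nd t) + 1)
      rw [s_succ_self]
      split_ifs at h1 <;> omega
    · rw [s_succ_ne _ _ _ h]; exact ih v

/-- In the terminal configuration a node with at least as many missing firings as its parent has
a child with at least as many missing firings as itself; following such children down to level
`n` shows that nothing is missing. -/
lemma s_final_aux (d v : ℕ) (hv : 1 ≤ v) (hd : n ≤ level v + d)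
    (h : ρ.s ρ.T (parent v) ≤ ρ.s ρ.T v) : ρ.s ρ.T v ≤ 0 := by
  induction d generalizing v with
  | zero =>
    have := ρ.s_anti (Nat.zero_le ρ.T) v
    have h0 : ρ.s 0 v = 0 := total_of_le v (by omega)
    omega
  | succ d ih =>
    by_contra hcon
    have h1 := ρ.term v hv
    have h2 : ρ.cnt ρ.T v ≤ 2 := by unfold cnt; omega
    rw [ρ.cnt_eq _ le_rfl v hv] at h2
    have hp : ∀ c, c = 2 * v ∨ c = 2 * v + 1 → parent c = v := by
      intro c hc
      rw [parent_of_two_le _ (by omega)]; omega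
    have i1 := ih (2 * v) (by omega) (by rw [level_double v hv]; omega)
    have i2 := ih (2 * v + 1) (by omega) (by rw [level_double_add_one v hv]; omega)
    rw [hp _ (Or.inl rfl)] at i1
    rw [hp _ (Or.inr rfl)] at i2
    by_cases hl : level v ≤ n
    · rw [if_pos hl] at h2
      by_cases hc : ρ.s ρ.T v ≤ ρ.s ρ.T (2 * v)
      · have := i1 hc; omega
      · have := i2 (by omega); omega
    · have := ρ.s_anti (Nat.zero_le ρ.T) v
      have h0 : ρ.s 0 v = 0 := total_of_le v (by omega)
      omega

lemma s_final (v : ℕ) (hv : 1 ≤ v) : ρ.s ρ.T v = 0 := by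
  induction v using Nat.strong_induction_on with
  | _ v ih =>
    refine le_antisymm (ρ.s_final_aux n v hv (by omega) ?_) (ρ.s_nonneg _ le_rfl v)
    by_cases h : v = 1
    · subst h; rw [parent_one]
    · rw [ih (parent v) (by rw [parent_of_two_le v (by omega)]; omega) (one_le_parent v hv)]
      exact ρ.s_nonneg _ le_rfl v

/-- `ρ.Window t`: at time `t`, near the end of the run, a node has at most as many firings left
as its parent, and at most one fewer. Proved for all times in `window`. -/
def Window (t : ℕ) : Prop := ∀ c, 2 ≤ c →
    (ρ.s t (parent c) + level c ≤ n → ρ.s t c ≤ ρ.s t (parent c)) ∧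
    (ρ.s t c + level c + 1 ≤ n → ρ.s t (parent c) ≤ ρ.s t c + 1)

/-- The bounds of `Window` are complementary to the condition for `nd t` to hold three chips,
so all of them are equalities when it fires. -/
lemma rigid_of_window (t : ℕ) (ht : t < ρ.T) (ih : ρ.Window t)
    (hl : ρ.s t (ρ.nd t) + level (ρ.nd t) ≤ n) :
    ρ.cnt t (ρ.nd t) = 3 ∧ ρ.s t (parent (ρ.nd t)) = ρ.s t (ρ.nd t) ∧
    ∀ c, 2 ≤ c → parent c = ρ.nd t → ρ.s t c = ρ.s t (ρ.nd t) - 1 := by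
  have hv := ρ.nd_pos t ht
  have h3 := ρ.three_le_cnt t ht
  have hcnt := ρ.cnt_eq t ht.le _ hv
  have q1 := (ih (2 * ρ.nd t) (by omega)).2
  have q2 := (ih (2 * ρ.nd t + 1) (by omega)).2
  rw [parent_of_two_le _ (by omega), level_double _ hv,
    show 2 * ρ.nd t / 2 = ρ.nd t by omega] at q1
  rw [parent_of_two_le _ (by omega), level_double_add_one _ hv,
    show (2 * ρ.nd t + 1) / 2 = ρ.nd t by omega] at q2
  have q3 : ρ.s t (ρ.nd t) ≤ ρ.s t (parent (ρ.nd t)) := by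
    by_cases h1 : ρ.nd t = 1
    · rw [h1, parent_one]
    · have := (ih (ρ.nd t) (by omega)).1
      by_contra hcon
      have := this (by omega)
      omega
  have hs := ρ.s_nonneg t ht.le (ρ.nd t)
  rw [if_pos (by omega)] at hcnt
  push_cast at q1 q2
  have a1 : ρ.s t (ρ.nd t) - 1 ≤ ρ.s t (2 * ρ.nd t) := by
    by_contra hcon; have := q1 (by omega); omega
  have a2 : ρ.s t (ρ.nd t) - 1 ≤ ρ.s t (2 * ρ.nd t + 1) := by
    by_contra hcon; have := q2 (by omega); omega
  refine ⟨by omega, by omega, ?_⟩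
  intro c hc hpc
  rw [parent_of_two_le c hc] at hpc
  have hcc : c = 2 * ρ.nd t ∨ c = 2 * ρ.nd t + 1 := by omega
  rcases hcc with rfl | rfl <;> omega

lemma window (t : ℕ) (ht : t ≤ ρ.T) : ρ.Window t := by
  induction t with
  | zero =>
    intro c hc
    have h1 := level_le_total (n := n) c
    have h2 := level_le_total (n := n) (parent c)
    have h3 := level_parent c hc
    simp only [s]
    constructor
    · intro h; omega
    · intro h; omega
  | succ t ih =>
    have ih := ih (by omega)
    have key := ρ.rigid_of_window t (by omega) ih
    intro c hc
    have hlp := level_parent c hc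
    have hpc := parent_of_two_le c hc
    obtain ⟨i1, i2⟩ := ih c hc
    rw [s_succ, s_succ]
    by_cases e1 : ρ.nd t = c
    · rw [e1] at key
      have : ρ.nd t ≠ parent c := by omega
      rw [if_pos e1, if_neg this]
      constructor
      · intro h; have := i1 (by omega); omega
      · intro h; have := (key (by omega)).2.1; omega
    · rw [if_neg e1]
      by_cases e2 : ρ.nd t = parent c
      · rw [e2] at key
        rw [if_pos e2]
        constructor
        · intro h
          have := (key (by omega)).2.2 c hc rfl
          omega
        · intro h; have := i2 (by omega); omega
      · rw [if_neg e2]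
        constructor
        · intro h; have := i1 (by omega); omega
        · intro h; have := i2 (by omega); omega

/-- A firing of `v` with `r = s t v` firings left is rigid once `level v + r ≤ n`: the parent has
exactly `r` and the children exactly `r - 1` firings left, and `v` holds only the three fired
chips. -/
lemma rigid (t : ℕ) (ht : t < ρ.T) (v : ℕ) (hv : ρ.nd t = v) (hl : ρ.s t v + level v ≤ n) :
    ρ.s t (parent v) = ρ.s t v ∧ (∀ c, 2 ≤ c → parent c = v → ρ.s t c = ρ.s t v - 1) ∧
    (∀ x ∈ Finset.Icc 1 (2 ^ n - 1), ρ.F t x = v → x = ρ.lo t ∨ x = ρ.md t ∨ x = ρ.hi t) := by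
  subst hv
  obtain ⟨h4, hp, hc⟩ := ρ.rigid_of_window t ht (ρ.window t ht.le) hl
  refine ⟨hp, hc, fun x hx hFx => ?_⟩
  have hcard := ρ.triple_card t ht
  have heq := Finset.eq_of_subset_of_card_le (ρ.triple_subset t ht) (by unfold cnt at h4; omega)
  have : x ∈ chipsAt (2 ^ n - 1) (ρ.F t) (ρ.nd t) := by
    unfold chipsAt
    exact Finset.mem_filter.2 ⟨hx, hFx⟩
  rw [← heq] at this
  simpa using this

/-! ### Moving chips -/

lemma F_succ_lo (t : ℕ) (ht : t < ρ.T) : ρ.F (t + 1) (ρ.lo t) = ρ.L (ρ.nd t) := by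
  rw [ρ.step t ht, if_pos rfl]

lemma F_succ_md (t : ℕ) (ht : t < ρ.T) : ρ.F (t + 1) (ρ.md t) = parent (ρ.nd t) := by
  rw [ρ.step t ht, if_neg (ρ.lo_ne_md t ht).symm, if_pos rfl]

lemma F_succ_hi (t : ℕ) (ht : t < ρ.T) : ρ.F (t + 1) (ρ.hi t) = ρ.R (ρ.nd t) := by
  rw [ρ.step t ht, if_neg (ρ.lo_ne_hi t ht).symm, if_neg (ρ.md_ne_hi t ht).symm, if_pos rfl]

lemma F_succ_cases (t : ℕ) (ht : t < ρ.T) (x : ℕ) :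
    x = ρ.lo t ∨ x = ρ.md t ∨ x = ρ.hi t ∨ ρ.F (t + 1) x = ρ.F t x := by
  by_cases h1 : x = ρ.lo t
  · exact Or.inl h1
  by_cases h2 : x = ρ.md t
  · exact Or.inr (Or.inl h2)
  by_cases h3 : x = ρ.hi t
  · exact Or.inr (Or.inr (Or.inl h3))
  · rw [ρ.step t ht, if_neg h1, if_neg h2, if_neg h3]; simp

lemma F_triple {t x : ℕ} (ht : t < ρ.T) (h : x = ρ.lo t ∨ x = ρ.md t ∨ x = ρ.hi t) :
    ρ.F t x = ρ.nd t := by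
  rcases h with rfl | rfl | rfl
  · exact ρ.F_lo t ht
  · exact ρ.F_md t ht
  · exact ρ.F_hi t ht

lemma F_succ_of_ne (t : ℕ) (ht : t < ρ.T) (x : ℕ) (h : ρ.nd t ≠ ρ.F t x) :
    ρ.F (t + 1) x = ρ.F t x := by
  rcases ρ.F_succ_cases t ht x with hx | hx | hx | hx
  · exact absurd (ρ.F_triple ht (Or.inl hx)).symm h
  · exact absurd (ρ.F_triple ht (Or.inr (Or.inl hx))).symm h
  · exact absurd (ρ.F_triple ht (Or.inr (Or.inr hx))).symm h
  · exact hx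

lemma Z_lo_of_triple {t x : ℕ} (ht : t < ρ.T) (h : x = ρ.lo t ∨ x = ρ.md t ∨ x = ρ.hi t)
    (hx : ρ.Z x) : ρ.Z (ρ.lo t) := by
  rcases h with rfl | rfl | rfl
  · exact hx
  · exact ρ.Z_md t ht hx
  · exact ρ.Z_md t ht (ρ.Z_hi t ht hx)

lemma two_le_L (v : ℕ) (hv : 1 ≤ v) : 2 ≤ ρ.L v := by
  rcases ρ.L_cases v with ⟨h, _⟩ | ⟨h, _⟩ <;> omega

lemma two_le_R (v : ℕ) (hv : 1 ≤ v) : 2 ≤ ρ.R v := by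
  rcases ρ.L_cases v with ⟨_, h⟩ | ⟨_, h⟩ <;> omega

lemma parent_L (v : ℕ) (hv : 1 ≤ v) : parent (ρ.L v) = v := by
  rw [parent_of_two_le _ (ρ.two_le_L v hv)]
  rcases ρ.L_cases v with ⟨h, _⟩ | ⟨h, _⟩ <;> omega

lemma parent_R (v : ℕ) (hv : 1 ≤ v) : parent (ρ.R v) = v := by
  rw [parent_of_two_le _ (ρ.two_le_R v hv)]
  rcases ρ.L_cases v with ⟨_, h⟩ | ⟨_, h⟩ <;> omega

lemma level_L (v : ℕ) (hv : 1 ≤ v) : level (ρ.L v) = level v + 1 := by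
  rw [level_parent _ (ρ.two_le_L v hv), ρ.parent_L v hv]

/-- A chip at `v` before the rigid firing of `v` with `r` firings left is fired from `v` no later
than at that firing, because that firing takes all chips of `v`. -/
lemma fired (v : ℕ) (hv : 1 ≤ v) (r : ℤ) (hr : 1 ≤ r) (hl : r + level v ≤ n) (x : ℕ)
    (hx : ρ.Z x) (d t : ℕ) (hd : t + d = ρ.T) (hF : ρ.F t x = v) (hs : r ≤ ρ.s t v) :
    ∃ t', t ≤ t' ∧ t' < ρ.T ∧ ρ.nd t' = v ∧ r ≤ ρ.s t' v ∧
      (x = ρ.lo t' ∨ x = ρ.md t' ∨ x = ρ.hi t') ∧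
      ∀ t'', t ≤ t'' → t'' ≤ t' → ρ.F t'' x = v := by
  induction d generalizing t with
  | zero =>
    have := ρ.s_final v hv
    have ht : t = ρ.T := by omega
    subst ht
    omega
  | succ d ih =>
    have ht : t < ρ.T := by omega
    by_cases hx3 : x = ρ.lo t ∨ x = ρ.md t ∨ x = ρ.hi t
    · refine ⟨t, le_rfl, ht, (ρ.F_triple ht hx3).symm.trans hF, hs, hx3, ?_⟩
      intro t'' h1 h2
      rw [show t'' = t by omega, hF]
    · have hF' : ρ.F (t + 1) x = v := by
        rcases ρ.F_succ_cases t ht x with h | h | h | h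
        · exact absurd (Or.inl h) hx3
        · exact absurd (Or.inr (Or.inl h)) hx3
        · exact absurd (Or.inr (Or.inr h)) hx3
        · rw [h, hF]
      have hs' : r ≤ ρ.s (t + 1) v := by
        rw [s_succ]
        split_ifs with hnd
        · by_contra hcon
          exact hx3 ((ρ.rigid t ht v hnd (by omega)).2.2 x (ρ.Z_mem x hx) hF)
        · omega
      obtain ⟨t', h1, h2, h3, h4, h5, h6⟩ := ih (t + 1) (by omega) hF' hs'
      refine ⟨t', by omega, h2, h3, h4, h5, fun t'' g1 g2 => ?_⟩
      rcases Nat.eq_or_lt_of_le g1 with rfl | g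
      · exact hF
      · exact h6 t'' (by omega) g2

/-- Where a chip at `v` comes from, if `v` has `r` firings left and the previous firing of `v`
was rigid: that firing removed all chips (but the middle one, at the root), so the chip arrived
later, from a child or by the firing of the parent with `r + 1` firings left. -/
lemma arrival (v : ℕ) (r : ℤ) (hl : r + level v + 1 ≤ n) (x : ℕ) (hv : 1 ≤ v)
    (hx : ρ.Z x) (t : ℕ) (ht : t ≤ ρ.T) (hs : ρ.s t v = r) (hF : ρ.F t x = v) :
    ∃ t₁ < t, (v = 1 ∧ ρ.nd t₁ = 1 ∧ ρ.s t₁ v = r + 1 ∧ x = ρ.md t₁) ∨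
      (ρ.s t₁ v = r ∧ 2 ≤ ρ.nd t₁ ∧ parent (ρ.nd t₁) = v ∧ x = ρ.md t₁) ∨
      (ρ.s t₁ v = r ∧ 2 ≤ v ∧ ρ.nd t₁ = parent v ∧ ρ.s t₁ (parent v) = r + 1 ∧
        ((x = ρ.lo t₁ ∧ v = ρ.L (ρ.nd t₁)) ∨ (x = ρ.hi t₁ ∧ v = ρ.R (ρ.nd t₁)))) := by
  induction t with
  | zero =>
    have := level_le_total (n := n) v
    simp only [s] at hs
    omega
  | succ t ih =>
    have ht' : t < ρ.T := by omega
    have hj := ρ.nd_pos t ht'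
    have hpar : 2 ≤ v → ρ.nd t = parent v → ρ.s t v = r → ρ.s t (parent v) = r + 1 := by
      intro h2 hnd hsv
      have hlp := level_parent v h2
      have h3 := (ρ.window t ht'.le v h2).2 (by omega)
      have h4 := (ρ.rigid t ht' (parent v) hnd (by omega)).2.1 v h2 rfl
      omega
    by_cases hnd : ρ.nd t = v
    · have hsv : ρ.s t v = r + 1 := by
        rw [s_succ, if_pos hnd] at hs; omega
      -- all chips of `v` move in a rigid firing, so `x` cannot have stayed
      have hx3 : x = ρ.lo t ∨ x = ρ.md t ∨ x = ρ.hi t := by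
        rcases ρ.F_succ_cases t ht' x with h | h | h | h
        · exact Or.inl h
        · exact Or.inr (Or.inl h)
        · exact Or.inr (Or.inr h)
        · rw [h] at hF
          exact (ρ.rigid t ht' v hnd (by omega)).2.2 x (ρ.Z_mem x hx) hF
      rcases hx3 with h | h | h
      · rw [h, ρ.F_succ_lo t ht'] at hF
        rcases ρ.L_cases (ρ.nd t) with ⟨h, _⟩ | ⟨h, _⟩ <;> omega
      · have h' := hF
        rw [h, ρ.F_succ_md t ht', hnd] at h'
        have : v = 1 := by
          by_contra hne
          rw [parent_of_two_le v (by omega)] at h'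
          omega
        exact ⟨t, by omega, Or.inl ⟨this, hnd.trans this, hsv, h⟩⟩
      · rw [h, ρ.F_succ_hi t ht'] at hF
        rcases ρ.L_cases (ρ.nd t) with ⟨_, h⟩ | ⟨_, h⟩ <;> omega
    · have hsv : ρ.s t v = r := by rw [← hs, s_succ_ne _ _ _ hnd]
      rcases ρ.F_succ_cases t ht' x with h | h | h | h
      · have h' := hF
        rw [h, ρ.F_succ_lo t ht'] at h'
        have hp := ρ.parent_L _ hj
        have h2 := ρ.two_le_L _ hj
        rw [h'] at hp h2
        exact ⟨t, by omega, Or.inr (Or.inr ⟨hsv, h2, hp.symm, hpar h2 hp.symm hsv,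
          Or.inl ⟨h, h'.symm⟩⟩)⟩
      · have h' := hF
        rw [h, ρ.F_succ_md t ht'] at h'
        have : ρ.nd t ≠ 1 := by
          intro h1
          rw [h1, parent_one] at h'
          omega
        exact ⟨t, by omega, Or.inr (Or.inl ⟨hsv, by omega, h', h⟩)⟩
      · have h' := hF
        rw [h, ρ.F_succ_hi t ht'] at h'
        have hp := ρ.parent_R _ hj
        have h2 := ρ.two_le_R _ hj
        rw [h'] at hp h2
        exact ⟨t, by omega, Or.inr (Or.inr ⟨hsv, h2, hp.symm, hpar h2 hp.symm hsv,
          Or.inr ⟨h, h'.symm⟩⟩)⟩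
      · obtain ⟨t₁, h1, h2⟩ := ih (by omega) hsv (by rw [← h, hF])
        exact ⟨t₁, by omega, h2⟩

/-! ### Zeros along a chain of `L`-children -/

/-- No zero is ever at `v` while `v` has exactly `r` firings left. -/
def NoZero (v : ℕ) (r : ℤ) : Prop := ∀ t ≤ ρ.T, ρ.s t v = r → ∀ x, ρ.Z x → ρ.F t x ≠ v

/-- Among the firings of `v` with at least `r` firings left, at most one involves a zero
(equivalently, sends a zero to `L v`). -/
def AtMostOne (v : ℕ) (r : ℤ) : Prop := ∀ t₁ < ρ.T, ∀ t₂ < ρ.T, ρ.nd t₁ = v → ρ.nd t₂ = v →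
  r ≤ ρ.s t₁ v → r ≤ ρ.s t₂ v → ρ.Z (ρ.lo t₁) → ρ.Z (ρ.lo t₂) → t₁ = t₂

lemma s_lt_of_lt {t₁ t₂ v : ℕ} (h : t₁ < t₂) (hnd : ρ.nd t₁ = v) : ρ.s t₂ v < ρ.s t₁ v := by
  have h1 := ρ.s_anti (Nat.succ_le_of_lt h) v
  have h2 := ρ.s_succ t₁ v
  rw [if_pos hnd] at h2
  simp only [Nat.succ_eq_add_one] at h1
  omega

/-- A node of level `n - 1` fires only once. -/
lemma atMostOne_bottom (v : ℕ) (hl : level v + 1 = n) : ρ.AtMostOne v 1 := by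
  have htot : total n v = 1 := by
    unfold total
    rw [if_pos (by omega), show n - level v = 1 by omega]
    norm_num
  intro t₁ _ t₂ _ n₁ n₂ h₁ h₂ _ _
  have b₁ : ρ.s t₁ v ≤ 1 := htot ▸ ρ.s_anti (Nat.zero_le t₁) v
  have b₂ : ρ.s t₂ v ≤ 1 := htot ▸ ρ.s_anti (Nat.zero_le t₂) v
  rcases lt_trichotomy t₁ t₂ with h | h | h
  · have := ρ.s_lt_of_lt h n₁; omega
  · exact h
  · have := ρ.s_lt_of_lt h n₂; omega

/-- If `v` has a zero when `k + 1` firings are left, the next firing of `v` passes a zero to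
`L v`, which then has `k` firings left. -/
lemma noZero_up (v : ℕ) (hv : 1 ≤ v) (k : ℕ) (hl : level v + k + 2 = n)
    (h : ρ.NoZero (ρ.L v) k) : ρ.NoZero v (k + 1) := by
  intro t ht hs x hx hF
  obtain ⟨t', h1, h2, h3, h4, h5, -⟩ :=
    ρ.fired v hv (k + 1) (by omega) (by omega) x hx (ρ.T - t) t (by omega) hF hs.ge
  have h6 := ρ.s_anti h1 v
  have h7 := (ρ.rigid t' h2 v h3 (by omega)).2.1 (ρ.L v) (ρ.two_le_L v hv) (ρ.parent_L v hv)
  have hne : ρ.nd t' ≠ ρ.L v := by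
    rcases ρ.L_cases v with ⟨h, _⟩ | ⟨h, _⟩ <;> omega
  refine h (t' + 1) (by omega) ?_ (ρ.lo t') (ρ.Z_lo_of_triple h2 h5 hx) ?_
  · rw [s_succ_ne _ _ _ hne]; omega
  · rw [ρ.F_succ_lo t' h2, h3]

/-- A zero sent by `v` to `L v`, when `v` has at least `k + 2` firings left, is later fired from
`L v` with at least `k + 1` firings of `L v` left. -/
lemma passed (v : ℕ) (hv : 1 ≤ v) (k : ℕ) (hl : level v + k + 2 = n) (t : ℕ) (ht : t < ρ.T)
    (hnd : ρ.nd t = v) (hs : (k : ℤ) + 2 ≤ ρ.s t v) (hZ : ρ.Z (ρ.lo t)) :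
    ∃ t', t < t' ∧ t' < ρ.T ∧ ρ.nd t' = ρ.L v ∧ (k : ℤ) + 1 ≤ ρ.s t' (ρ.L v) ∧
      (ρ.lo t = ρ.lo t' ∨ ρ.lo t = ρ.md t' ∨ ρ.lo t = ρ.hi t') ∧
      ∀ t'', t < t'' → t'' ≤ t' → ρ.F t'' (ρ.lo t) = ρ.L v := by
  have hL2 := ρ.two_le_L v hv
  have hlL := ρ.level_L v hv
  have hne : ρ.nd t ≠ ρ.L v := by
    rcases ρ.L_cases v with ⟨h, _⟩ | ⟨h, _⟩ <;> omega
  have hs' : (k : ℤ) + 1 ≤ ρ.s (t + 1) (ρ.L v) := by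
    rw [s_succ_ne _ _ _ hne]
    by_contra hcon
    have := (ρ.window t ht.le (ρ.L v) hL2).2 (by omega)
    rw [ρ.parent_L v hv] at this
    omega
  obtain ⟨t', h1, h2, h3, h4, h5, h6⟩ := ρ.fired (ρ.L v) (by omega) (k + 1) (by omega) (by omega)
    (ρ.lo t) hZ (ρ.T - (t + 1)) (t + 1) (by omega) (by rw [ρ.F_succ_lo t ht, hnd]) hs'
  exact ⟨t', by omega, h2, h3, h4, h5, fun t'' g1 g2 => h6 t'' (by omega) g2⟩

/-- `L v` never returns a zero to `v` (up to and including its firing with `k + 1` firings left):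
the zero would be at `v` when `v` has `k + 1` firings left, or else make `v` send another zero to
`L v`, which would be fired there as a second one. -/
lemma not_returned (v : ℕ) (hv : 1 ≤ v) (k : ℕ) (hl : level v + k + 2 = n)
    (h0 : ρ.NoZero v (k + 1)) (h1 : ρ.AtMostOne (ρ.L v) (k + 1)) (t : ℕ) (ht : t < ρ.T)
    (hnd : ρ.nd t = ρ.L v) (hs : (k : ℤ) + 1 ≤ ρ.s t (ρ.L v)) : ¬ ρ.Z (ρ.md t) := by
  intro hZ
  have hL2 := ρ.two_le_L v hv
  have hlL := ρ.level_L v hv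
  have hpL := ρ.parent_L v hv
  have hF : ρ.F (t + 1) (ρ.md t) = v := by rw [ρ.F_succ_md t ht, hnd, hpL]
  have hne : ρ.nd t ≠ v := by
    rcases ρ.L_cases v with ⟨h, _⟩ | ⟨h, _⟩ <;> omega
  by_cases hk : ρ.s t (ρ.L v) = k + 1
  · have h2 := (ρ.rigid t ht (ρ.L v) hnd (by omega)).1
    rw [hpL] at h2
    exact h0 (t + 1) (by omega) (by rw [s_succ_ne _ _ _ hne]; omega) _ hZ hF
  · have hs' : (k : ℤ) + 2 ≤ ρ.s (t + 1) v := by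
      rw [s_succ_ne _ _ _ hne]
      by_contra hcon
      have := (ρ.window t ht.le (ρ.L v) hL2).1 (by rw [hpL]; omega)
      rw [hpL] at this
      omega
    obtain ⟨t', g1, g2, g3, g4, g5, -⟩ := ρ.fired v hv (k + 2) (by omega) (by omega)
      (ρ.md t) hZ (ρ.T - (t + 1)) (t + 1) (by omega) hF hs'
    have hZ' := ρ.Z_lo_of_triple g2 g5 hZ
    obtain ⟨t'', e1, e2, e3, e4, e5, -⟩ := ρ.passed v hv k hl t' g2 g3 g4 hZ'
    have := h1 t ht t'' e2 hnd e3 hs e4 (ρ.Z_md t ht hZ) (ρ.Z_lo_of_triple e2 e5 hZ')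
    omega

lemma atMostOne_up (v : ℕ) (hv : 1 ≤ v) (k : ℕ) (hl : level v + k + 2 = n)
    (h0 : ρ.NoZero v (k + 1)) (h1 : ρ.AtMostOne (ρ.L v) (k + 1)) : ρ.AtMostOne v (k + 2) := by
  have hne : v ≠ ρ.L v := by
    rcases ρ.L_cases v with ⟨h, _⟩ | ⟨h, _⟩ <;> omega
  have key : ∀ t₁ < ρ.T, ∀ t₂ < ρ.T, ρ.nd t₁ = v → ρ.nd t₂ = v → (k : ℤ) + 2 ≤ ρ.s t₁ v →
      (k : ℤ) + 2 ≤ ρ.s t₂ v → ρ.Z (ρ.lo t₁) → ρ.Z (ρ.lo t₂) → ¬ t₁ < t₂ := by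
    intro t₁ ht₁ t₂ ht₂ n₁ n₂ s₁ s₂ z₁ z₂ hlt
    obtain ⟨a, a1, a2, a3, a4, a5, a6⟩ := ρ.passed v hv k hl t₁ ht₁ n₁ s₁ z₁
    obtain ⟨b, b1, b2, b3, b4, b5, -⟩ := ρ.passed v hv k hl t₂ ht₂ n₂ s₂ z₂
    have hab : a = b := h1 a a2 b b2 a3 b3 a4 b4 (ρ.Z_lo_of_triple a2 a5 z₁)
      (ρ.Z_lo_of_triple b2 b5 z₂)
    subst hab
    have hmd := ρ.not_returned v hv k hl h0 h1 a a2 a3 a4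
    have hlo : ∀ x, ρ.Z x → (x = ρ.lo a ∨ x = ρ.md a ∨ x = ρ.hi a) → x = ρ.lo a := by
      rintro x hx (h | h | h)
      · exact h
      · exact absurd (h ▸ hx) hmd
      · exact absurd (ρ.Z_hi a a2 (h ▸ hx)) hmd
    have h3 : ρ.lo t₁ = ρ.lo t₂ := (hlo _ z₁ a5).trans (hlo _ z₂ b5).symm
    -- the same chip would be at `L v` and at `v` at time `t₂`
    have h4 := a6 t₂ hlt b1.le
    rw [h3, ρ.F_lo t₂ ht₂, n₂] at h4
    exact hne h4
  intro t₁ ht₁ t₂ ht₂ n₁ n₂ s₁ s₂ z₁ z₂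
  have k1 := key t₁ ht₁ t₂ ht₂ n₁ n₂ s₁ s₂ z₁ z₂
  have k2 := key t₂ ht₂ t₁ ht₁ n₂ n₁ s₂ s₁ z₂ z₁
  omega

lemma one_le_iterate_L (j v : ℕ) (hv : 1 ≤ v) : 1 ≤ ρ.L^[j] v := by
  induction j generalizing v with
  | zero => exact hv
  | succ j ih => exact ih _ (by have := ρ.two_le_L v hv; omega)

lemma chain_up (j v : ℕ) (hv : 1 ≤ v) (k : ℕ) (hl : level v + j + k + 1 = n)
    (h0 : ρ.NoZero (ρ.L^[j] v) k) (h1 : ρ.AtMostOne (ρ.L^[j] v) (k + 1)) :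
    ρ.NoZero v (k + j : ℕ) ∧ ρ.AtMostOne v ((k + j : ℕ) + 1) := by
  induction j generalizing v with
  | zero => exact ⟨h0, h1⟩
  | succ j ih =>
    have hlL := ρ.level_L v hv
    obtain ⟨i0, i1⟩ := ih (ρ.L v) (by have := ρ.two_le_L v hv; omega) (by omega) h0 h1
    have u0 := ρ.noZero_up v hv (k + j) (by omega) i0
    have u1 := ρ.atMostOne_up v hv (k + j) (by omega) u0 i1
    constructor
    · convert u0 using 1; push_cast; ring
    · convert u1 using 1; push_cast; ring

/-! ### Zeros in the subtree of the top of the chain -/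

/-- If at most one firing of `i` before time `t` involves a zero, then at time `t` the subtree of
a child `w` of `i` contains at most one zero, and none if there was no such firing. -/
lemma subtree_zero (i w : ℕ) (hi : 1 ≤ i) (hw : w = 2 * i ∨ w = 2 * i + 1) (t : ℕ) (ht : t ≤ ρ.T)
    (H : ∀ t₁ < t, ∀ t₂ < t, ρ.nd t₁ = i → ρ.nd t₂ = i → ρ.Z (ρ.lo t₁) → ρ.Z (ρ.lo t₂) → t₁ = t₂) :
    (∀ x, ρ.Z x → inSubtree w (ρ.F t x) → ∃ t₁ < t, ρ.nd t₁ = i ∧ ρ.Z (ρ.lo t₁)) ∧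
    (∀ x y, ρ.Z x → ρ.Z y → inSubtree w (ρ.F t x) → inSubtree w (ρ.F t y) → x = y) := by
  induction t with
  | zero =>
    have : ∀ x, ¬ inSubtree w (ρ.F 0 x) := by
      intro x hx
      rw [ρ.init] at hx
      have := inSubtree_le hx
      omega
    exact ⟨fun x _ h => absurd h (this x), fun x _ _ _ h => absurd h (this x)⟩
  | succ t ih =>
    have ht' : t < ρ.T := by omega
    have hj := ρ.nd_pos t ht'
    obtain ⟨i1, i2⟩ := ih ht'.le (fun t₁ h₁ t₂ h₂ => H t₁ (by omega) t₂ (by omega))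
    -- a chip enters the subtree of `w` only by a firing of `i`, and only one chip at a time
    have hdiv : ∀ c, c / 2 = ρ.nd t → inSubtree w c → inSubtree w (ρ.nd t) ∨
        (c = w ∧ ρ.nd t = i) := by
      intro c hc hcw
      by_cases hcw' : c = w
      · exact Or.inr ⟨hcw', by omega⟩
      · exact Or.inl (hc ▸ inSubtree_half hcw hcw')
    have enter : ∀ x, inSubtree w (ρ.F (t + 1) x) → inSubtree w (ρ.F t x) ∨
        (ρ.nd t = i ∧ ((x = ρ.lo t ∧ ρ.L i = w) ∨ (x = ρ.hi t ∧ ρ.R i = w))) := by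
      intro x hx
      rcases ρ.F_succ_cases t ht' x with h | h | h | h
      · subst h
        rw [ρ.F_succ_lo t ht'] at hx
        rw [ρ.F_lo t ht']
        rcases hdiv _ (by rcases ρ.L_cases (ρ.nd t) with ⟨h, _⟩ | ⟨h, _⟩ <;> omega) hx with h | h
        · exact Or.inl h
        · exact Or.inr ⟨h.2, Or.inl ⟨rfl, h.2 ▸ h.1⟩⟩
      · subst h
        rw [ρ.F_succ_md t ht'] at hx
        rw [ρ.F_md t ht']
        left
        by_cases h1 : ρ.nd t = 1
        · rw [h1, parent_one] at hx
          rw [h1]; exact hx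
        · rw [parent_of_two_le _ (by omega)] at hx
          exact inSubtree_of_half hx
      · subst h
        rw [ρ.F_succ_hi t ht'] at hx
        rw [ρ.F_hi t ht']
        rcases hdiv _ (by rcases ρ.L_cases (ρ.nd t) with ⟨_, h⟩ | ⟨_, h⟩ <;> omega) hx with h | h
        · exact Or.inl h
        · exact Or.inr ⟨h.2, Or.inr ⟨rfl, h.2 ▸ h.1⟩⟩
      · exact Or.inl (h ▸ hx)
    have newZ : ∀ x, ρ.Z x → ((x = ρ.lo t ∧ ρ.L i = w) ∨ (x = ρ.hi t ∧ ρ.R i = w)) →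
        ρ.Z (ρ.lo t) := by
      rintro x hx (⟨h, -⟩ | ⟨h, -⟩)
      · exact h ▸ hx
      · exact ρ.Z_lo_of_triple ht' (Or.inr (Or.inr h)) hx
    have noOld : ∀ x y, ρ.Z x → ρ.Z y → inSubtree w (ρ.F t x) → ρ.nd t = i →
        ((y = ρ.lo t ∧ ρ.L i = w) ∨ (y = ρ.hi t ∧ ρ.R i = w)) → False := by
      intro x y hx hy hxw hnd hyw
      obtain ⟨t₁, h1, h2, h3⟩ := i1 x hx hxw
      have := H t₁ (by omega) t (by omega) h2 hnd h3 (newZ y hy hyw)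
      omega
    constructor
    · intro x hx hxw
      rcases enter x hxw with h | ⟨h, h'⟩
      · obtain ⟨t₁, h1, h2⟩ := i1 x hx h
        exact ⟨t₁, by omega, h2⟩
      · exact ⟨t, by omega, h, newZ x hx h'⟩
    · intro x y hx hy hxw hyw
      rcases enter x hxw with h | ⟨h, h'⟩ <;> rcases enter y hyw with g | ⟨g, g'⟩
      · exact i2 x y hx hy h g
      · exact (noOld x y hx hy h g g').elim
      · exact (noOld y x hy hx g h h').elim
      · have := ρ.L_cases i
        rcases h' with h' | h' <;> rcases g' with g' | g' <;> omega

/-- A node `c` in the subtree of a child of `i` cannot send a zero up at time `t`, if at most one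
firing of `i` before time `t` involves a zero. -/
lemma no_zero_up (i c t : ℕ) (hi : 1 ≤ i) (ht : t < ρ.T)
    (H : ∀ t₁ < t, ∀ t₂ < t, ρ.nd t₁ = i → ρ.nd t₂ = i → ρ.Z (ρ.lo t₁) → ρ.Z (ρ.lo t₂) → t₁ = t₂)
    (hc : inSubtree (2 * i) c ∨ inSubtree (2 * i + 1) c) (hnd : ρ.nd t = c) :
    ¬ ρ.Z (ρ.md t) := by
  intro hZ
  have hlo := ρ.Z_md t ht hZ
  have h1 := ρ.F_lo t ht
  have h2 := ρ.F_md t ht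
  rw [hnd] at h1 h2
  rcases hc with hc | hc
  · exact ρ.lo_ne_md t ht ((ρ.subtree_zero i (2 * i) hi (Or.inl rfl) t ht.le H).2 _ _ hlo hZ
      (by rwa [h1]) (by rwa [h2]))
  · exact ρ.lo_ne_md t ht ((ρ.subtree_zero i (2 * i + 1) hi (Or.inr rfl) t ht.le H).2 _ _ hlo hZ
      (by rwa [h1]) (by rwa [h2]))

/-- The middle chip of the firing of `i` with `r + 1` firings left waits at the parent of `i`
until the parent fires. -/
lemma mid_waits (i : ℕ) (hi : 2 ≤ i) (r : ℤ) (hl : r + level i + 1 ≤ n) (t : ℕ) (ht : t ≤ ρ.T)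
    (hs : ρ.s t i = r) (hp : ρ.s t (parent i) = r + 1) :
    ∃ t₀ < t, ρ.nd t₀ = i ∧ ρ.s t₀ i = r + 1 ∧ ρ.F t (ρ.md t₀) = parent i := by
  have hpi := parent_of_two_le i hi
  have hlp := level_parent i hi
  induction t with
  | zero =>
    have := level_le_total (n := n) i
    simp only [s] at hs
    omega
  | succ t ih =>
    have ht' : t < ρ.T := by omega
    by_cases h1 : ρ.nd t = i
    · refine ⟨t, by omega, h1, ?_, by rw [ρ.F_succ_md t ht', h1]⟩
      rw [s_succ, if_pos h1] at hs; omega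
    · rw [s_succ_ne _ _ _ h1] at hs
      by_cases h2 : ρ.nd t = parent i
      · rw [s_succ, if_pos h2] at hp
        have := (ρ.rigid t ht' (parent i) h2 (by omega)).2.1 i hi rfl
        omega
      · rw [s_succ_ne _ _ _ h2] at hp
        obtain ⟨t₀, g1, g2, g3, g4⟩ := ih ht'.le hs hp
        exact ⟨t₀, by omega, g2, g3, by rw [ρ.F_succ_of_ne t ht' _ (by rw [g4]; exact h2), g4]⟩

/-- At the top `i` of the chain, zeros do not come back to `i`: the subtrees of its children hold
at most one zero each and so return none, and the parent of `i`, if any, sends the largest chip of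
a triple containing the nonzero middle chip sent up by `i` before. -/
lemma noZero_top (i : ℕ) (hi : 1 ≤ i) (m : ℕ) (hl : level i + m + 1 = n)
    (htop : i = 1 ∨ i = ρ.R (parent i)) (h0 : ρ.NoZero i m) (h1 : ρ.AtMostOne i (m + 1))
    (d r : ℕ) (hd : r + d = m) : ρ.NoZero i r := by
  induction d using Nat.strong_induction_on generalizing r with
  | _ d ih =>
    by_cases hd0 : d = 0
    · rwa [show r = m by omega]
    have hup : ∀ r' : ℤ, r < r' → r' ≤ m → ρ.NoZero i r' := by
      intro r' h h'
      have := ih (m - r'.toNat) (by omega) r'.toNat (by omega)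
      rwa [show ((r'.toNat : ℕ) : ℤ) = r' by omega] at this
    intro t ht hs x hx hF
    obtain ⟨t₁, ht₁, h⟩ := ρ.arrival i r (by omega) x hi hx t ht hs hF
    have ht₁T : t₁ < ρ.T := by omega
    rcases h with ⟨h2, h3, h4, h5⟩ | ⟨h2, h3, h4, h5⟩ | ⟨h2, h3, h4, h5, h6⟩
    · refine hup (r + 1) (by omega) (by omega) t₁ ht₁T.le h4 x hx ?_
      rw [h5, ρ.F_md t₁ ht₁T, h3, h2]
    · rw [parent_of_two_le _ h3] at h4
      refine ρ.no_zero_up i (ρ.nd t₁) t₁ hi ht₁T ?_ ?_ rfl (h5 ▸ hx)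
      · have big : ∀ a < t₁, ρ.nd a = i → ρ.Z (ρ.lo a) → (m : ℤ) + 1 ≤ ρ.s a i := by
          intro a ha hna hza
          by_contra hcon
          have := ρ.s_lt_of_lt ha hna
          exact hup (ρ.s a i) (by omega) (by omega) a (by omega) rfl _ hza
            (by rw [ρ.F_lo a (by omega), hna])
        intro a ha b hb na nb za zb
        exact h1 a (by omega) b (by omega) na nb (big a ha na za) (big b hb nb zb) za zb
      · have hcc : ρ.nd t₁ = 2 * i ∨ ρ.nd t₁ = 2 * i + 1 := by omega
        rcases hcc with hcc | hcc
        · left; rw [hcc]; exact inSubtree_refl _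
        · right; rw [hcc]; exact inSubtree_refl _
    · have hiR : i = ρ.R (parent i) := by
        rcases htop with h | h
        · omega
        · exact h
      have hhi : x = ρ.hi t₁ := by
        rcases h6 with ⟨_, h⟩ | ⟨h, _⟩
        · have := ρ.L_cases (parent i)
          rw [h4] at h
          omega
        · exact h
      have hlp := level_parent i h3
      obtain ⟨t₀, g1, g2, g3, g4⟩ := ρ.mid_waits i h3 r (by omega) t₁ ht₁T.le h2 h5
      have hmem := (ρ.rigid t₁ ht₁T (parent i) h4 (by omega)).2.2 (ρ.md t₀)
        (ρ.md_mem t₀ (by omega)) g4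
      have z1 : ρ.Z (ρ.hi t₁) := hhi ▸ hx
      have z2 := ρ.Z_hi t₁ ht₁T z1
      have z3 := ρ.Z_md t₁ ht₁T z2
      have z : ρ.Z (ρ.md t₀) := by
        rcases hmem with h | h | h <;> rw [h] <;> assumption
      exact hup (r + 1) (by omega) (by omega) t₀ (by omega) g3 _ z
        (by rw [ρ.F_md t₀ (by omega), g2])

lemma inSubtree_child {i v : ℕ} (h : inSubtree i v) (hne : v ≠ i) :
    inSubtree (2 * i) v ∨ inSubtree (2 * i + 1) v := by
  obtain ⟨t, ht⟩ := h
  cases t with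
  | zero => simp at ht; omega
  | succ t =>
    rw [pow_succ, ← Nat.div_div_eq_div_mul] at ht
    have : v / 2 ^ t = 2 * i ∨ v / 2 ^ t = 2 * i + 1 := by omega
    rcases this with h | h
    · exact Or.inl ⟨t, h⟩
    · exact Or.inr ⟨t, h⟩

/-- A zero that has left the top `i` for the last time only moves downwards and reaches the
bottom level. -/
lemma noZero_subtree (i : ℕ) (hi : 1 ≤ i) (m : ℕ) (hl : level i + m + 1 = n)
    (htop : i = 1 ∨ i = ρ.R (parent i)) (h0 : ρ.NoZero i m) (h1 : ρ.AtMostOne i (m + 1))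
    (v : ℕ) (hv : inSubtree i v) (r : ℕ) (hr : level v + r + 1 ≤ n) : ρ.NoZero v r := by
  have top : ∀ r : ℕ, r ≤ m → ρ.NoZero i r := fun r hr =>
    ρ.noZero_top i hi m hl htop h0 h1 (m - r) r (by omega)
  have H : ∀ t₁ < ρ.T, ∀ t₂ < ρ.T, ρ.nd t₁ = i → ρ.nd t₂ = i → ρ.Z (ρ.lo t₁) → ρ.Z (ρ.lo t₂) →
      t₁ = t₂ := by
    have big : ∀ a < ρ.T, ρ.nd a = i → ρ.Z (ρ.lo a) → (m : ℤ) + 1 ≤ ρ.s a i := by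
      intro a ha hna hza
      by_contra hcon
      have hs := ρ.s_nonneg a ha.le i
      exact top (ρ.s a i).toNat (by omega) a ha.le (by omega) _ hza (by rw [ρ.F_lo a ha, hna])
    intro a ha b hb na nb za zb
    exact h1 a ha b hb na nb (big a ha na za) (big b hb nb zb) za zb
  induction v using Nat.strong_induction_on generalizing r with
  | _ v ih =>
    by_cases hvi : v = i
    · subst hvi; exact top r (by omega)
    have hiv := inSubtree_le hv
    intro t ht hs x hx hF
    obtain ⟨t₁, ht₁, h⟩ := ρ.arrival v r (by omega) x (by omega) hx t ht hs hF
    have ht₁T : t₁ < ρ.T := by omega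
    rcases h with ⟨h2, -⟩ | ⟨h2, h3, h4, h5⟩ | ⟨h2, h3, h4, h5, h6⟩
    · omega
    · rw [parent_of_two_le _ h3] at h4
      have hsub : inSubtree i (ρ.nd t₁) := inSubtree_of_half (h4 ▸ hv)
      exact ρ.no_zero_up i (ρ.nd t₁) t₁ hi ht₁T
        (fun a ha b hb => H a (by omega) b (by omega))
        (inSubtree_child hsub (by omega)) rfl (h5 ▸ hx)
    · have hpv := parent_of_two_le v h3
      have hlp := level_parent v h3
      have hsub := inSubtree_half hv hvi
      rw [← hpv] at hsub
      refine ih (parent v) (by omega) hsub (r + 1) (by omega) t₁ ht₁T.le (by push_cast; exact h5)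
        x hx ?_
      rw [← h4]
      rcases h6 with ⟨h, _⟩ | ⟨h, _⟩
      · rw [h, ρ.F_lo t₁ ht₁T]
      · rw [h, ρ.F_hi t₁ ht₁T]

lemma exists_top (i : ℕ) (hi : 1 ≤ i) : ∃ j i', 1 ≤ i' ∧ i = ρ.L^[j] i' ∧ inSubtree i' i ∧
    level i = level i' + j ∧ (i' = 1 ∨ i' = ρ.R (parent i')) := by
  induction i using Nat.strong_induction_on with
  | _ i ih =>
    by_cases h1 : i = 1
    · exact ⟨0, i, hi, rfl, inSubtree_refl i, rfl, Or.inl h1⟩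
    have hp := parent_of_two_le i (by omega)
    by_cases h2 : i = ρ.R (parent i)
    · exact ⟨0, i, hi, rfl, inSubtree_refl i, rfl, Or.inr h2⟩
    have h3 : i = ρ.L (parent i) := by have := ρ.L_cases (parent i); omega
    obtain ⟨j, i', a1, a2, a3, a4, a5⟩ := ih (parent i) (by omega) (one_le_parent i hi)
    refine ⟨j + 1, i', a1, ?_, inSubtree_of_half (hp ▸ a3), ?_, a5⟩
    · rw [Function.iterate_succ_apply', ← a2]; exact h3
    · rw [level_parent i (by omega), a4]; ring

/-- If the final chip `x` of the `L`-most descendant on level `n - 1` of a node `i` is not a zero,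
then every zero in the final subtree of `i` is below level `n - 1`. -/
theorem final (i : ℕ) (hi : 1 ≤ i) (d : ℕ) (hd : level i + d + 1 = n)
    (x : ℕ) (hxM : x ∈ Finset.Icc 1 (2 ^ n - 1)) (hx : ρ.F ρ.T x = ρ.L^[d] i) (hxZ : ¬ ρ.Z x)
    (y : ℕ) (hy : inSubtree i (ρ.F ρ.T y)) (hyl : level (ρ.F ρ.T y) + 1 ≤ n) : ¬ ρ.Z y := by
  intro hyZ
  obtain ⟨j, i', a1, a2, a3, a4, a5⟩ := ρ.exists_top i hi
  have hℓ : ρ.L^[d] i = ρ.L^[d + j] i' := by rw [Function.iterate_add_apply, a2]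
  rw [hℓ] at hx
  have hℓ1 := ρ.one_le_iterate_L (d + j) i' a1
  have hlev : ∀ k, level (ρ.L^[k] i') = level i' + k := by
    intro k
    induction k with
    | zero => rfl
    | succ k ih =>
      rw [Function.iterate_succ_apply', ρ.level_L _ (ρ.one_le_iterate_L k i' a1), ih]; ring
  have hlev := hlev (d + j)
  set ℓ := ρ.L^[d + j] i' with hℓdef
  have base : ρ.NoZero ℓ (0 : ℕ) := by
    intro t ht hs z hz hF
    -- `ℓ` does not fire any more, so `z` stays there, next to `x`
    have stay : ρ.F ρ.T z = ℓ := by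
      have : ∀ t', t ≤ t' → t' ≤ ρ.T → ρ.F t' z = ℓ := by
        intro t' h
        induction t', h using Nat.le_induction with
        | base => exact fun _ => hF
        | succ t' h ih =>
          intro hT
          have ih := ih (by omega)
          rw [ρ.F_succ_of_ne t' (by omega) z, ih]
          rw [ih]
          intro hnd
          have h1 := ρ.s_lt_of_lt (Nat.lt_succ_self t') hnd
          have h2 := ρ.s_nonneg (t' + 1) hT ℓ
          have h3 := ρ.s_anti h ℓ
          simp only [Nat.succ_eq_add_one] at h1
          omega
      exact this _ ht le_rfl
    have hc := ρ.cnt_eq ρ.T le_rfl ℓ hℓ1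
    rw [ρ.s_final ℓ hℓ1, ρ.s_final _ (one_le_parent ℓ hℓ1), ρ.s_final (2 * ℓ) (by omega),
      ρ.s_final (2 * ℓ + 1) (by omega), if_pos (by omega)] at hc
    have hc1 : (chipsAt (2 ^ n - 1) (ρ.F ρ.T) ℓ).card ≤ 1 := by unfold cnt at hc; omega
    have hzx : z = x := by
      refine Finset.card_le_one.1 hc1 z ?_ x ?_
      · unfold chipsAt; exact Finset.mem_filter.2 ⟨ρ.Z_mem z hz, stay⟩
      · unfold chipsAt; exact Finset.mem_filter.2 ⟨hxM, hx⟩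
    exact hxZ (hzx ▸ hz)
  obtain ⟨c0, c1⟩ := ρ.chain_up (d + j) i' a1 0 (by omega) base
    (by simpa using ρ.atMostOne_bottom ℓ (by omega))
  have := ρ.noZero_subtree i' a1 (0 + (d + j)) (by omega) a5 c0 c1 (ρ.F ρ.T y)
    (inSubtree_trans a3 hy) 0 (by omega)
  have hpos : 1 ≤ ρ.F ρ.T y := hi.trans (inSubtree_le hy)
  exact this ρ.T le_rfl (by rw [ρ.s_final _ hpos]; rfl) y hyZ rfl

end Run

/-! ### From move lists to runs -/

lemma legal_get (M : ℕ) (l : List Move) (f : LConfig) (h : LLegalSeq M l f) (t : ℕ)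
    (ht : t < l.length) : ∃ i a b c, l.getD t (0, 0, 0, 0) = (i, a, b, c) ∧
      1 ≤ i ∧ 1 ≤ a ∧ c ≤ M ∧ a < b ∧ b < c ∧ LFireSeq (l.take t) f a = i ∧
      LFireSeq (l.take t) f b = i ∧ LFireSeq (l.take t) f c = i ∧
      LFireSeq (l.take (t + 1)) f = LFire i a b c (LFireSeq (l.take t) f) := by
  induction l generalizing f t with
  | nil => simp at ht
  | cons mv l ih =>
    obtain ⟨i, a, b, c⟩ := mv
    obtain ⟨h1, h2, h3, h4, h5, h6, h7, h8, h9⟩ := h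
    cases t with
    | zero => exact ⟨i, a, b, c, rfl, h1, h2, h3, h4, h5, h6, h7, h8, by simp [LFireSeq]⟩
    | succ t =>
      obtain ⟨i', a', b', c', g⟩ := ih _ h9 t (by simpa using ht)
      exact ⟨i', a', b', c', by simpa [LFireSeq] using g⟩

/-- The run of a legal list of moves, with the labels at most `y` as zeros. -/
def lowerRun (n : ℕ) (hn : 2 ≤ n) (l : List Move) (hl : LLegalSeq (2 ^ n - 1) l (fun _ => 1))
    (hterm : LTerminal (2 ^ n - 1) (LFireSeq l (fun _ => 1))) (y : ℕ) (hy : y ≤ 2 ^ n - 1) :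
    Run n where
  hn := hn
  L v := 2 * v
  R v := 2 * v + 1
  F t := LFireSeq (l.take t) (fun _ => 1)
  nd t := (l.getD t (0, 0, 0, 0)).1
  lo t := (l.getD t (0, 0, 0, 0)).2.1
  md t := (l.getD t (0, 0, 0, 0)).2.2.1
  hi t := (l.getD t (0, 0, 0, 0)).2.2.2
  T := l.length
  Z x := 1 ≤ x ∧ x ≤ y
  hLR := Or.inl fun v => ⟨rfl, rfl⟩
  init x := by simp [LFireSeq]
  nd_pos t ht := by obtain ⟨i, a, b, c, e, h⟩ := legal_get _ l _ hl t ht; rw [e]; exact h.1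
  lo_mem t ht := by
    obtain ⟨i, a, b, c, e, h⟩ := legal_get _ l _ hl t ht; rw [e, Finset.mem_Icc]; dsimp only; omega
  md_mem t ht := by
    obtain ⟨i, a, b, c, e, h⟩ := legal_get _ l _ hl t ht; rw [e, Finset.mem_Icc]; dsimp only; omega
  hi_mem t ht := by
    obtain ⟨i, a, b, c, e, h⟩ := legal_get _ l _ hl t ht; rw [e, Finset.mem_Icc]; dsimp only; omega
  lo_ne_md t ht := by obtain ⟨i, a, b, c, e, h⟩ := legal_get _ l _ hl t ht; rw [e]; dsimp only; omega
  lo_ne_hi t ht := by obtain ⟨i, a, b, c, e, h⟩ := legal_get _ l _ hl t ht; rw [e]; dsimp only; omega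
  md_ne_hi t ht := by obtain ⟨i, a, b, c, e, h⟩ := legal_get _ l _ hl t ht; rw [e]; dsimp only; omega
  F_lo t ht := by obtain ⟨i, a, b, c, e, h⟩ := legal_get _ l _ hl t ht; rw [e]; tauto
  F_md t ht := by obtain ⟨i, a, b, c, e, h⟩ := legal_get _ l _ hl t ht; rw [e]; tauto
  F_hi t ht := by obtain ⟨i, a, b, c, e, h⟩ := legal_get _ l _ hl t ht; rw [e]; tauto
  step t ht x := by
    obtain ⟨i, a, b, c, e, h⟩ := legal_get _ l _ hl t ht
    rw [e, h.2.2.2.2.2.2.2.2]; rfl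
  term v hv := by rw [List.take_length]; exact hterm v hv
  Z_mem x hx := by rw [Finset.mem_Icc]; omega
  Z_md t ht hz := by
    obtain ⟨i, a, b, c, e, h⟩ := legal_get _ l _ hl t ht; rw [e] at hz ⊢; simp only at hz ⊢; omega
  Z_hi t ht hz := by
    obtain ⟨i, a, b, c, e, h⟩ := legal_get _ l _ hl t ht; rw [e] at hz ⊢; simp only at hz ⊢; omega

/-- The mirror image of the run of a legal list of moves, with the labels at least `y` as
zeros. -/
def upperRun (n : ℕ) (hn : 2 ≤ n) (l : List Move) (hl : LLegalSeq (2 ^ n - 1) l (fun _ => 1))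
    (hterm : LTerminal (2 ^ n - 1) (LFireSeq l (fun _ => 1))) (y : ℕ) (hy : 1 ≤ y) :
    Run n where
  hn := hn
  L v := 2 * v + 1
  R v := 2 * v
  F t := LFireSeq (l.take t) (fun _ => 1)
  nd t := (l.getD t (0, 0, 0, 0)).1
  lo t := (l.getD t (0, 0, 0, 0)).2.2.2
  md t := (l.getD t (0, 0, 0, 0)).2.2.1
  hi t := (l.getD t (0, 0, 0, 0)).2.1
  T := l.length
  Z x := y ≤ x ∧ x ≤ 2 ^ n - 1
  hLR := Or.inr fun v => ⟨rfl, rfl⟩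
  init x := by simp [LFireSeq]
  nd_pos t ht := by obtain ⟨i, a, b, c, e, h⟩ := legal_get _ l _ hl t ht; rw [e]; exact h.1
  lo_mem t ht := by
    obtain ⟨i, a, b, c, e, h⟩ := legal_get _ l _ hl t ht; rw [e, Finset.mem_Icc]; dsimp only; omega
  md_mem t ht := by
    obtain ⟨i, a, b, c, e, h⟩ := legal_get _ l _ hl t ht; rw [e, Finset.mem_Icc]; dsimp only; omega
  hi_mem t ht := by
    obtain ⟨i, a, b, c, e, h⟩ := legal_get _ l _ hl t ht; rw [e, Finset.mem_Icc]; dsimp only; omega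
  lo_ne_md t ht := by obtain ⟨i, a, b, c, e, h⟩ := legal_get _ l _ hl t ht; rw [e]; dsimp only; omega
  lo_ne_hi t ht := by obtain ⟨i, a, b, c, e, h⟩ := legal_get _ l _ hl t ht; rw [e]; dsimp only; omega
  md_ne_hi t ht := by obtain ⟨i, a, b, c, e, h⟩ := legal_get _ l _ hl t ht; rw [e]; dsimp only; omega
  F_lo t ht := by obtain ⟨i, a, b, c, e, h⟩ := legal_get _ l _ hl t ht; rw [e]; tauto
  F_md t ht := by obtain ⟨i, a, b, c, e, h⟩ := legal_get _ l _ hl t ht; rw [e]; tauto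
  F_hi t ht := by obtain ⟨i, a, b, c, e, h⟩ := legal_get _ l _ hl t ht; rw [e]; tauto
  step t ht x := by
    obtain ⟨i, a, b, c, e, h⟩ := legal_get _ l _ hl t ht
    rw [e, h.2.2.2.2.2.2.2.2]
    simp only [LFire]
    split_ifs <;> first | rfl | omega
  term v hv := by rw [List.take_length]; exact hterm v hv
  Z_mem x hx := by rw [Finset.mem_Icc]; omega
  Z_md t ht hz := by
    obtain ⟨i, a, b, c, e, h⟩ := legal_get _ l _ hl t ht; rw [e] at hz ⊢; simp only at hz ⊢; omega
  Z_hi t ht hz := by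
    obtain ⟨i, a, b, c, e, h⟩ := legal_get _ l _ hl t ht; rw [e] at hz ⊢; simp only at hz ⊢; omega

lemma iterate_left (d i : ℕ) : (fun v => 2 * v)^[d] i = 2 ^ d * i := by
  induction d generalizing i with
  | zero => simp
  | succ d ih => rw [Function.iterate_succ_apply, ih]; ring

lemma iterate_right (d i : ℕ) : (fun v => 2 * v + 1)^[d] i = 2 ^ d * (i + 1) - 1 := by
  induction d generalizing i with
  | zero => simp
  | succ d ih => rw [Function.iterate_succ_apply, ih]; congr 1; ring

/-- Fix `n ≥ 2` and a reachable terminal configuration with chips `1, …, 2^n − 1`. For every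
node `i` with `level i ≤ n − 1`, the chip at node `2^{n−1−level i}·i` (the straight left
descendant of `i` on level `n − 1`) has the smallest label among all chips held by nodes of
the subtree of `i` on levels at most `n − 1`; symmetrically the chip at node
`2^{n−1−level i}·(i+1) − 1` has the largest such label. -/
theorem stmt9 (n : ℕ) (hn : 2 ≤ n) (f : LConfig)
    (hreach : LReachable (2 ^ n - 1) f) (hterm : LTerminal (2 ^ n - 1) f) :
    ∀ i, 1 ≤ i → level i ≤ n - 1 →
      (∀ x ∈ Finset.Icc 1 (2 ^ n - 1), ∀ y ∈ Finset.Icc 1 (2 ^ n - 1),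
        f x = 2 ^ (n - 1 - level i) * i →
        inSubtree i (f y) → level (f y) ≤ n - 1 → x ≤ y) ∧
      (∀ x ∈ Finset.Icc 1 (2 ^ n - 1), ∀ y ∈ Finset.Icc 1 (2 ^ n - 1),
        f x = 2 ^ (n - 1 - level i) * (i + 1) - 1 →
        inSubtree i (f y) → level (f y) ≤ n - 1 → y ≤ x) := by
  obtain ⟨l, hl, rfl⟩ := hreach
  intro i hi hlev
  have hd : level i + (n - 1 - level i) + 1 = n := by omega
  constructor
  · intro x hx y hy hfx hsub hly
    by_contra hlt
    rw [Finset.mem_Icc] at hy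
    let ρ := lowerRun n hn l hl hterm y hy.2
    have hF : ρ.F ρ.T = LFireSeq l (fun _ => 1) := by
      change LFireSeq (l.take l.length) _ = _
      rw [List.take_length]
    refine ρ.final i hi _ hd x hx ?_ ?_ y (by rwa [hF]) (by rw [hF]; omega) ⟨hy.1, le_rfl⟩
    · rw [hF, hfx]; exact (iterate_left _ i).symm
    · intro hz
      exact hlt hz.2
  · intro x hx y hy hfx hsub hly
    by_contra hlt
    rw [Finset.mem_Icc] at hy
    let ρ := upperRun n hn l hl hterm y hy.1
    have hF : ρ.F ρ.T = LFireSeq l (fun _ => 1) := by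
      change LFireSeq (l.take l.length) _ = _
      rw [List.take_length]
    refine ρ.final i hi _ hd x hx ?_ ?_ y (by rwa [hF]) (by rw [hF]; omega) ⟨le_rfl, hy.2⟩
    · rw [hF, hfx]; exact (iterate_right _ i).symm
    · intro hz
      exact hlt hz.1
end

section
/- There exist an integer n ≥ 1, a reachable terminal configuration of labeled chip-firing with chips 1, …, 2^n − 1, a node i, and an integer k ≥ 1 with level(i) + k ≤ n, such that the chip at node 2^k·i does NOT have the smallest label among the chips held by the nodes of the subtree of i on levels level(i), …, level(i) + k. (In particular, for n = 5 there is a reachable terminal configuration in which the chip at node 4 = 2^2·1 is not the smallest among the chips on the first three levels.) -/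
/-- Legality of a concrete firing sequence is decidable, by recursion on the sequence. -/
instance decidableLLegalSeq (M : ℕ) :
    (l : List Move) → (f : LConfig) → Decidable (LLegalSeq M l f)
  | [], _ => isTrue trivial
  | (i, a, b, c) :: l, f =>
    haveI := decidableLLegalSeq M l (LFire i a b c f)
    inferInstanceAs (Decidable (1 ≤ i ∧ 1 ≤ a ∧ c ≤ M ∧ a < b ∧ b < c ∧
      f a = i ∧ f b = i ∧ f c = i ∧ LLegalSeq M l (LFire i a b c f)))

/-- The firing sequence of the counterexample, for 31 chips; an entry `(i, a, b, c)` fires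
the chips `a < b < c` at node `i`. -/
def witnessMoves : List Move :=
  [(1, 16, 17, 18), (1, 14, 15, 17), (1, 9, 10, 11), (2, 9, 14, 16),
   (1, 12, 13, 14), (1, 4, 10, 20), (3, 17, 18, 20), (1, 25, 26, 27),
   (1, 15, 18, 19), (1, 10, 13, 18), (1, 23, 24, 26), (1, 1, 2, 3),
   (1, 24, 28, 29), (1, 6, 7, 8), (1, 21, 22, 31), (3, 19, 26, 27),
   (1, 7, 13, 22), (3, 3, 11, 14), (3, 8, 18, 29), (1, 13, 18, 26),
   (1, 18, 28, 30), (6, 3, 8, 17), (2, 4, 6, 7), (1, 2, 5, 6),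
   (3, 26, 30, 31), (1, 5, 11, 28), (7, 20, 27, 29), (3, 22, 27, 28),
   (2, 5, 12, 15), (7, 14, 28, 31), (2, 1, 2, 10), (6, 19, 22, 26),
   (3, 8, 22, 28), (4, 1, 4, 5), (1, 11, 12, 22), (2, 4, 11, 13),
   (2, 21, 23, 24), (1, 2, 11, 12), (5, 10, 13, 15), (2, 13, 18, 25),
   (1, 11, 23, 30), (1, 18, 23, 27), (4, 4, 9, 13), (3, 22, 27, 30),
   (5, 16, 24, 25), (2, 9, 11, 18), (1, 11, 23, 27), (2, 2, 11, 24),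
   (3, 6, 12, 27), (1, 11, 12, 23), (4, 2, 9, 21), (7, 27, 28, 30),
   (8, 1, 2, 4), (15, 29, 30, 31), (6, 6, 8, 22), (5, 7, 18, 24),
   (14, 14, 20, 27), (3, 8, 23, 28), (2, 9, 11, 18), (7, 20, 28, 30),
   (1, 11, 12, 23), (13, 17, 22, 26), (12, 3, 6, 19), (11, 15, 24, 25),
   (6, 6, 8, 22), (3, 8, 23, 28), (9, 5, 13, 21), (10, 7, 10, 16),
   (4, 2, 9, 13), (5, 10, 18, 24), (2, 9, 11, 18), (1, 11, 12, 23)]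

/-- The configuration in which `witnessMoves` ends. -/
def witnessConfig : LConfig := LFireSeq witnessMoves (fun _ => 1)

theorem witnessMoves_legal : LLegalSeq 31 witnessMoves (fun _ => 1) := by
  decide +kernel

theorem witnessConfig_injOn :
    ∀ a ∈ Finset.Icc 1 31, ∀ b ∈ Finset.Icc 1 31,
      witnessConfig a = witnessConfig b → a = b := by
  decide +kernel

theorem witnessConfig_terminal : LTerminal 31 witnessConfig := by
  intro v _
  refine le_trans (Finset.card_le_one.mpr fun a ha b hb => ?_) one_le_two
  simp only [chipsAt, Finset.mem_filter] at ha hb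
  exact witnessConfig_injOn a ha.1 b hb.1 (ha.2.trans hb.2.symm)

theorem witnessConfig_nine : witnessConfig 9 = 4 := by decide +kernel

theorem witnessConfig_eight : witnessConfig 8 = 6 := by decide +kernel

/-- There exist `n ≥ 1`, a reachable terminal configuration with chips `1, …, 2^n − 1`, a
node `i`, and `k ≥ 1` with `level i + k ≤ n`, such that the chip at node `2^k·i` does not
have the smallest label among the chips held by nodes of the subtree of `i` on levels
`level i, …, level i + k`. -/
theorem stmt10 :
    ∃ (n : ℕ) (f : LConfig) (i k x y : ℕ),
      1 ≤ n ∧ LReachable (2 ^ n - 1) f ∧ LTerminal (2 ^ n - 1) f ∧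
      1 ≤ i ∧ 1 ≤ k ∧ level i + k ≤ n ∧
      x ∈ Finset.Icc 1 (2 ^ n - 1) ∧ y ∈ Finset.Icc 1 (2 ^ n - 1) ∧
      f x = 2 ^ k * i ∧ inSubtree i (f y) ∧ level (f y) ≤ level i + k ∧ y < x := by
  refine ⟨5, witnessConfig, 1, 2, 9, 8, by norm_num, ⟨witnessMoves, witnessMoves_legal, rfl⟩,
    witnessConfig_terminal, le_rfl, by norm_num, ?_, by simp, by simp, witnessConfig_nine,
    ⟨2, ?_⟩, ?_, by norm_num⟩
  · norm_num [level]
  · rw [witnessConfig_eight]; norm_num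
  · rw [witnessConfig_eight]
    have h : Nat.log 2 6 = 2 := by decide +kernel
    simp [level, h]
end

section
/- For every n ≥ 2, the endgame poset P_n is a lattice: every pair of elements of P_n has a least upper bound (join) and a greatest lower bound (meet) in P_n. -/
/-- Membership in the endgame poset `P_n`: the pairs `(i, j)` with `i ≥ 1` and
`level i + j < n`, where `(i, j)` represents the `j`-th-from-last firing of node `i`. -/
def memP (n : ℕ) (x : ℕ × ℕ) : Prop := 1 ≤ x.1 ∧ level x.1 + x.2 < n

/-- The generating (covering) relations of `P_n`: `(i, j) < (2i, j)`, `(i, j) < (2i+1, j)`,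
and, for `i ≥ 2`, `(i, j) < (⌊i/2⌋, j+1)`, whenever both pairs involved lie in `P_n`. -/
def covStep (n : ℕ) (x y : ℕ × ℕ) : Prop :=
  memP n x ∧ memP n y ∧
    (y = (2 * x.1, x.2) ∨ y = (2 * x.1 + 1, x.2) ∨ (2 ≤ x.1 ∧ y = (x.1 / 2, x.2 + 1)))

/-- The partial order of `P_n`: the reflexive-transitive closure of the generating
relations. -/
def Ple (n : ℕ) (x y : ℕ × ℕ) : Prop := Relation.ReflTransGen (covStep n) x y

/-- The strict order of `P_n`. -/
def Plt (n : ℕ) (x y : ℕ × ℕ) : Prop := Ple n x y ∧ x ≠ y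

/-- The rank function `ρ((i, j)) = level i + 2j`. -/
def rho (x : ℕ × ℕ) : ℕ := level x.1 + 2 * x.2

/-- `z` is the join (least upper bound) of `x` and `y` in `P_n`. -/
def IsJoin (n : ℕ) (x y z : ℕ × ℕ) : Prop :=
  memP n z ∧ Ple n x z ∧ Ple n y z ∧
    ∀ w, memP n w → Ple n x w → Ple n y w → Ple n z w

/-- `z` is the meet (greatest lower bound) of `x` and `y` in `P_n`. -/
def IsMeet (n : ℕ) (x y z : ℕ × ℕ) : Prop :=
  memP n z ∧ Ple n z x ∧ Ple n z y ∧
    ∀ w, memP n w → Ple n w x → Ple n w y → Ple n w z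

/-- The ancestor description of the order: the `(y.2 - x.2)`-th ancestor of `x.1` is an ancestor of
`y.1`, where `0` counts as an ancestor of every node. -/
def AncLe (x y : ℕ × ℕ) : Prop := x.2 ≤ y.2 ∧ ∃ k, y.1 / 2 ^ k = x.1 / 2 ^ (y.2 - x.2)

/-- One of the two nodes is an ancestor of the other. -/
def TreeComparable (a b : ℕ) : Prop := (∃ k, a / 2 ^ k = b) ∨ (∃ k, b / 2 ^ k = a)

lemma div_two_pow_add (a k l : ℕ) : a / 2 ^ (k + l) = a / 2 ^ k / 2 ^ l := by
  rw [pow_add, Nat.div_div_eq_div_mul]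

lemma level_two_mul {i : ℕ} (h : 1 ≤ i) : level (2 * i) = level i + 1 := by
  unfold level
  rw [mul_comm, Nat.log_mul_base (by norm_num) (by omega)]

lemma level_two_mul_add_one {i : ℕ} (h : 1 ≤ i) : level (2 * i + 1) = level i + 1 := by
  unfold level
  rw [Nat.log_of_one_lt_of_le (by norm_num) (by omega)]
  congr 3
  omega

lemma level_half {i : ℕ} (h : 2 ≤ i) : level (i / 2) + 1 = level i := by
  unfold level
  rw [Nat.log_of_one_lt_of_le (by norm_num) h]

lemma level_div_two_pow {i d : ℕ} (h : 1 ≤ i / 2 ^ d) : level (i / 2 ^ d) + d = level i := by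
  induction d with
  | zero => simp
  | succ d ih =>
    rw [pow_succ, ← Nat.div_div_eq_div_mul] at h ⊢
    have h2 : 2 ≤ i / 2 ^ d := by omega
    have := level_half h2
    have := ih (by omega)
    omega

lemma AncLe.trans {x y z : ℕ × ℕ} (h₁ : AncLe x y) (h₂ : AncLe y z) : AncLe x z := by
  obtain ⟨hj, k, hk⟩ := h₁
  obtain ⟨hj', l, hl⟩ := h₂
  refine ⟨hj.trans hj', l + k, ?_⟩
  have e : z.2 - x.2 = (y.2 - x.2) + (z.2 - y.2) := by omega
  rw [div_two_pow_add, hl, e, div_two_pow_add, ← hk, ← div_two_pow_add, ← div_two_pow_add,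
    Nat.add_comm]

lemma covStep.ancLe {n : ℕ} {x y : ℕ × ℕ} (h : covStep n x y) : AncLe x y := by
  obtain ⟨-, -, rfl | rfl | ⟨-, rfl⟩⟩ := h
  · exact ⟨le_rfl, 1, by simp⟩
  · refine ⟨le_rfl, 1, ?_⟩
    simp only [pow_one, Nat.sub_self, pow_zero, Nat.div_one]
    omega
  · exact ⟨Nat.le_succ _, 0, by simp⟩

lemma Ple.ancLe {n : ℕ} {x y : ℕ × ℕ} (h : Ple n x y) : AncLe x y := by
  induction h with
  | refl => exact ⟨le_rfl, 0, by simp⟩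
  | tail _ hs ih => exact ih.trans hs.ancLe

/-- Every ancestor of the root, virtual or not, is an ancestor of every node. -/
lemma exists_div_eq_one_div {a : ℕ} (h : 1 ≤ a) (d : ℕ) : ∃ k, a / 2 ^ k = 1 / 2 ^ d := by
  refine ⟨Nat.log 2 a + d, ?_⟩
  have h1 : a / 2 ^ Nat.log 2 a = 1 := by
    apply Nat.div_eq_of_lt_le
    · simpa using Nat.pow_log_le_self 2 (by omega)
    · simpa [pow_succ, mul_comm] using Nat.lt_pow_succ_log_self (b := 2) (by norm_num) a
  rw [div_two_pow_add, h1]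

/-- Going down the tree from an ancestor, without any upward step. -/
lemma ple_of_div_eq {n : ℕ} (k : ℕ) : ∀ {a b j : ℕ}, memP n (a, j) → memP n (b, j) →
    b / 2 ^ k = a → Ple n (a, j) (b, j) := by
  induction k with
  | zero =>
    rintro a b j - - rfl
    rw [pow_zero, Nat.div_one]
    exact Relation.ReflTransGen.refl
  | succ k ih =>
    rintro a b j ha hb h
    rw [pow_succ', ← Nat.div_div_eq_div_mul] at h
    have ha1 : 1 ≤ a := ha.1
    have hb2 : 1 ≤ b / 2 := by
      by_contra hc
      have : b / 2 = 0 := by omega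
      rw [this, Nat.zero_div] at h
      omega
    have hl := level_half (i := b) (by omega)
    have hbn : level b + j < n := hb.2
    have hm : memP n (b / 2, j) := ⟨hb2, by change level (b / 2) + j < n; omega⟩
    refine (ih ha hm h).tail ⟨hm, hb, ?_⟩
    rcases Nat.even_or_odd' b with ⟨c, hc | hc⟩
    · left
      ext <;> simp
      omega
    · right; left
      ext <;> simp
      omega

/-- The path uses an upward step as long as the second coordinate has to grow; at the root, a
detour through the child `2` raises the second coordinate by one. -/
lemma ple_of_ancLe {n : ℕ} (d : ℕ) : ∀ {a b j : ℕ}, memP n (a, j) → memP n (b, j + d) →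
    (∃ k, b / 2 ^ k = a / 2 ^ d) → Ple n (a, j) (b, j + d) := by
  induction d with
  | zero =>
    rintro a b j ha hb ⟨k, hk⟩
    exact ple_of_div_eq k ha hb (by simpa using hk)
  | succ d ih =>
    rintro a b j ha hb hk
    have e : j + (d + 1) = j + 1 + d := by omega
    rw [e] at hb ⊢
    have ha1 : 1 ≤ a := ha.1
    have han : level a + j < n := ha.2
    have hbn : level b + (j + 1 + d) < n := hb.2
    by_cases h2 : 2 ≤ a
    · have hl := level_half h2
      have hm : memP n (a / 2, j + 1) :=
        ⟨by change 1 ≤ a / 2; omega, by change level (a / 2) + (j + 1) < n; omega⟩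
      refine Relation.ReflTransGen.head ⟨ha, hm, Or.inr (Or.inr ⟨h2, rfl⟩)⟩ (ih hm hb ?_)
      rwa [Nat.div_div_eq_div_mul, ← pow_succ']
    · obtain rfl : a = 1 := by omega
      have hl1 : level 1 = 1 := by simp [level]
      have hl2 : level 2 = 2 := by
        rw [level_two_mul (i := 1) le_rfl, hl1]
      have hlb : 1 ≤ level b := Nat.le_add_left _ _
      have hm2 : memP n (2, j) := ⟨by simp, by change level 2 + j < n; omega⟩
      have hm1 : memP n (1, j + 1) := ⟨le_rfl, by change level 1 + (j + 1) < n; omega⟩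
      refine Relation.ReflTransGen.head ⟨ha, hm2, Or.inl rfl⟩ ?_
      refine Relation.ReflTransGen.head ⟨hm2, hm1, Or.inr (Or.inr ⟨le_rfl, by simp⟩)⟩ ?_
      exact ih hm1 hb (exists_div_eq_one_div hb.1 d)

lemma ple_iff {n : ℕ} {x y : ℕ × ℕ} (hx : memP n x) (hy : memP n y) :
    Ple n x y ↔ AncLe x y := by
  refine ⟨Ple.ancLe, ?_⟩
  obtain ⟨a, j⟩ := x
  obtain ⟨b, j'⟩ := y
  rintro ⟨hj, hk⟩
  obtain ⟨d, rfl⟩ := Nat.exists_eq_add_of_le hj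
  exact ple_of_ancLe d hx hy (by simpa using hk)

lemma IsJoin.symm {n : ℕ} {x y z : ℕ × ℕ} (h : IsJoin n x y z) : IsJoin n y x z :=
  ⟨h.1, h.2.2.1, h.2.1, fun w hw h₁ h₂ => h.2.2.2 w hw h₂ h₁⟩

/-- If `d` is least such that the `d`-th ancestors of `p` and `q` are comparable, and that of `p` is
the deeper one and an actual node, then it gives the join. -/
lemma isJoin_of_div_eq {n p q j d : ℕ} (hp : memP n (p, j)) (hq : memP n (q, j))
    (hpos : 1 ≤ p / 2 ^ d) (hcomp : ∃ k, p / 2 ^ d / 2 ^ k = q / 2 ^ d)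
    (hmin : ∀ e, TreeComparable (p / 2 ^ e) (q / 2 ^ e) → d ≤ e) :
    IsJoin n (p, j) (q, j) (p / 2 ^ d, j + d) := by
  have hz : memP n (p / 2 ^ d, j + d) := by
    have hl := level_div_two_pow hpos
    have hpn : level p + j < n := hp.2
    exact ⟨hpos, by change level (p / 2 ^ d) + (j + d) < n; omega⟩
  refine ⟨hz, (ple_iff hp hz).2 ⟨by simp, 0, by simp⟩, (ple_iff hq hz).2 ⟨by simp, ?_⟩, ?_⟩
  · simpa using hcomp
  · rintro ⟨c, j'⟩ hw h₁ h₂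
    obtain ⟨hj, k, hk⟩ := h₁.ancLe
    obtain ⟨-, l, hl⟩ := h₂.ancLe
    obtain ⟨e, rfl⟩ := Nat.exists_eq_add_of_le hj
    simp only [Nat.add_sub_cancel_left] at hk hl
    -- two ancestors of the same node `c` are comparable
    have hde : d ≤ e := by
      apply hmin
      rw [← hk, ← hl]
      rcases Nat.le_total k l with h | h
      · exact Or.inl ⟨l - k, by rw [← div_two_pow_add, Nat.add_sub_cancel' h]⟩
      · exact Or.inr ⟨k - l, by rw [← div_two_pow_add, Nat.add_sub_cancel' h]⟩
    refine (ple_iff hz hw).2 ⟨by simpa using hde, k, ?_⟩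
    change c / 2 ^ k = p / 2 ^ d / 2 ^ (j + e - (j + d))
    rw [hk, ← div_two_pow_add]
    congr 2
    omega

lemma exists_join_same {n p q j : ℕ} (hp : memP n (p, j)) (hq : memP n (q, j)) :
    ∃ z, IsJoin n (p, j) (q, j) z := by
  classical
  have hp1 : 1 ≤ p := hp.1
  have hq1 : 1 ≤ q := hq.1
  have hex : ∃ d, TreeComparable (p / 2 ^ d) (q / 2 ^ d) := by
    refine ⟨p, Or.inr ⟨q, ?_⟩⟩
    rw [← div_two_pow_add, Nat.add_comm, div_two_pow_add, Nat.div_eq_of_lt q.lt_two_pow_self,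
      Nat.div_eq_of_lt p.lt_two_pow_self, Nat.zero_div]
  set d := Nat.find hex with hd
  have hspec : TreeComparable (p / 2 ^ d) (q / 2 ^ d) := Nat.find_spec hex
  have hmin : ∀ e, TreeComparable (p / 2 ^ e) (q / 2 ^ e) → d ≤ e := fun e he =>
    Nat.find_min' hex he
  -- by minimality of `d` the two ancestors are not both virtual: nodes `0` and `1` are comparable
  have hne : ¬ (p / 2 ^ d = 0 ∧ q / 2 ^ d = 0) := by
    rintro ⟨h₁, h₂⟩
    obtain h0 | ⟨c, hc⟩ : d = 0 ∨ ∃ c, d = c + 1 := by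
      cases d with
      | zero => exact Or.inl rfl
      | succ c => exact Or.inr ⟨c, rfl⟩
    · rw [h0] at h₁
      simp at h₁
      omega
    · rw [hc, div_two_pow_add, pow_one] at h₁ h₂
      have : d ≤ c := by
        apply hmin
        rcases (show p / 2 ^ c = 0 ∨ p / 2 ^ c = 1 by omega) with hA | hA <;>
          rcases (show q / 2 ^ c = 0 ∨ q / 2 ^ c = 1 by omega) with hB | hB <;> rw [hA, hB]
        · exact Or.inl ⟨0, rfl⟩
        · exact Or.inr ⟨1, rfl⟩
        · exact Or.inl ⟨1, rfl⟩
        · exact Or.inl ⟨0, rfl⟩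
      omega
  rcases hspec with ⟨k, hk⟩ | ⟨k, hk⟩
  · refine ⟨_, isJoin_of_div_eq hp hq ?_ ⟨k, hk⟩ hmin⟩
    by_contra h
    have h0 : p / 2 ^ d = 0 := Nat.lt_one_iff.mp (not_le.mp h)
    exact hne ⟨h0, by rw [← hk, h0, Nat.zero_div]⟩
  · refine ⟨_, (isJoin_of_div_eq hq hp ?_ ⟨k, hk⟩ fun e he => hmin e he.symm).symm⟩
    by_contra h
    have h0 : q / 2 ^ d = 0 := Nat.lt_one_iff.mp (not_le.mp h)
    exact hne ⟨by rw [← hk, h0, Nat.zero_div], h0⟩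

lemma exists_join_of_le {n : ℕ} {x y : ℕ × ℕ} (hx : memP n x) (hy : memP n y)
    (hxy : x.2 ≤ y.2) : ∃ z, IsJoin n x y z := by
  obtain ⟨a, i⟩ := x
  obtain ⟨q, j⟩ := y
  obtain ⟨e, rfl⟩ := Nat.exists_eq_add_of_le (show i ≤ j from hxy)
  have hqn : level q + (i + e) < n := hy.2
  have han : level a + i < n := hx.2
  have hlq : 1 ≤ level q := Nat.le_add_left _ _
  -- `(p, i + e)` is the least element above `(a, i)` with second coordinate at least `i + e`
  obtain ⟨p, hp, hap, hleast⟩ : ∃ p, memP n (p, i + e) ∧ Ple n (a, i) (p, i + e) ∧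
      ∀ w, memP n w → i + e ≤ w.2 → Ple n (a, i) w → Ple n (p, i + e) w := by
    by_cases h : 1 ≤ a / 2 ^ e
    · have hl := level_div_two_pow h
      have hm : memP n (a / 2 ^ e, i + e) :=
        ⟨h, by change level (a / 2 ^ e) + (i + e) < n; omega⟩
      refine ⟨_, hm, (ple_iff hx hm).2 ⟨by simp, 0, by simp⟩, ?_⟩
      rintro ⟨c, j'⟩ hw hj hle
      obtain ⟨-, k, hk⟩ := hle.ancLe
      change i + e ≤ j' at hj
      refine (ple_iff hm hw).2 ⟨hj, k, ?_⟩
      change c / 2 ^ k = a / 2 ^ (j' - i) at hk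
      change c / 2 ^ k = a / 2 ^ e / 2 ^ (j' - (i + e))
      rw [hk, ← div_two_pow_add]
      congr 2
      omega
    · have h0 : a / 2 ^ e = 0 := Nat.lt_one_iff.mp (not_le.mp h)
      have hl1 : level 1 = 1 := by simp [level]
      have hm : memP n (1, i + e) := ⟨le_rfl, by change level 1 + (i + e) < n; omega⟩
      refine ⟨1, hm, (ple_iff hx hm).2 ⟨by simp, 1, by simp [h0]⟩, ?_⟩
      intro w hw hj _
      exact (ple_iff hm hw).2 ⟨hj, exists_div_eq_one_div hw.1 _⟩
  obtain ⟨z, hz, hz₁, hz₂, hz₃⟩ := exists_join_same hp hy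
  exact ⟨z, hz, hap.trans hz₁, hz₂, fun w hw h₁ h₂ =>
    hz₃ w hw (hleast w hw h₂.ancLe.1 h₁) h₂⟩

lemma exists_join {n : ℕ} {x y : ℕ × ℕ} (hx : memP n x) (hy : memP n y) :
    ∃ z, IsJoin n x y z := by
  rcases Nat.le_total x.2 y.2 with h | h
  · exact exists_join_of_le hx hy h
  · obtain ⟨z, hz⟩ := exists_join_of_le hy hx h
    exact ⟨z, hz.symm⟩

lemma covStep.rho_eq {n : ℕ} {x y : ℕ × ℕ} (h : covStep n x y) : rho y = rho x + 1 := by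
  obtain ⟨hx, -, rfl | rfl | ⟨h2, rfl⟩⟩ := h
  · simp only [rho, level_two_mul hx.1]
    omega
  · simp only [rho, level_two_mul_add_one hx.1]
    omega
  · have := level_half h2
    simp only [rho]
    omega

lemma Ple.eq_or_rho_lt {n : ℕ} {x y : ℕ × ℕ} (h : Ple n x y) : x = y ∨ rho x < rho y := by
  induction h with
  | refl => exact Or.inl rfl
  | tail _ hs ih =>
    have := hs.rho_eq
    rcases ih with rfl | ih
    · exact Or.inr (by omega)
    · exact Or.inr (by omega)

lemma exists_meet {n : ℕ} (hn : 2 ≤ n) {x y : ℕ × ℕ} (hx : memP n x) (hy : memP n y) :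
    ∃ z, IsMeet n x y z := by
  classical
  -- ranks of common lower bounds
  let R : ℕ → Prop := fun r => ∃ w, memP n w ∧ Ple n w x ∧ Ple n w y ∧ rho w = r
  have hm : memP n (1, 0) := ⟨le_rfl, by simp [level]; omega⟩
  have hbot : ∀ w, memP n w → Ple n (1, 0) w := fun w hw =>
    (ple_iff hm hw).2 ⟨Nat.zero_le _, exists_div_eq_one_div hw.1 _⟩
  have hbound : ∀ w, memP n w → rho w ≤ 2 * n := by
    rintro w ⟨-, hw⟩
    unfold rho
    omega
  have hR : R (rho (1, 0)) := ⟨_, hm, hbot x hx, hbot y hy, rfl⟩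
  obtain ⟨z, hz, hzx, hzy, hzr⟩ : R (Nat.findGreatest R (2 * n)) :=
    Nat.findGreatest_spec (hbound _ hm) hR
  refine ⟨z, hz, hzx, hzy, fun w hw hwx hwy => ?_⟩
  obtain ⟨v, hv, hzv, hwv, hleast⟩ := exists_join hz hw
  have hvR : R (rho v) := ⟨v, hv, hleast x hx hzx hwx, hleast y hy hzy hwy, rfl⟩
  have hle := Nat.le_findGreatest (hbound v hv) hvR
  rcases hzv.eq_or_rho_lt with rfl | hlt
  · exact hwv
  · omega

/-- For every `n ≥ 2`, the endgame poset `P_n` is a lattice: every pair of elements has a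
least upper bound (join) and a greatest lower bound (meet) in `P_n`. -/
theorem stmt13 (n : ℕ) (hn : 2 ≤ n) :
    ∀ x y, memP n x → memP n y → (∃ z, IsJoin n x y z) ∧ (∃ z, IsMeet n x y z) := by
  exact fun x y hx hy => ⟨exists_join hx hy, exists_meet hn hx hy⟩
end

section
/- For every n ≥ 2, the endgame poset P_n is a modular lattice: for all elements x, y of P_n, ρ(x) + ρ(y) = ρ(x ∨ y) + ρ(x ∧ y), where ρ((i, j)) = level(i) + 2j, ∨ denotes join and ∧ denotes meet in P_n. -/
/-! ### Common ancestors in the binary tree -/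

/-- The `u`-th ancestor of node `i` and the `v`-th ancestor of node `k` exist and coincide.
The `u`-th ancestor of `i` is `i / 2 ^ u`; it exists when this quotient is positive. -/
def Common (i k u v : ℕ) : Prop := i / 2 ^ u = k / 2 ^ v ∧ 1 ≤ i / 2 ^ u

lemma Common.symm {i k u v : ℕ} (h : Common i k u v) : Common k i v u :=
  ⟨h.1.symm, h.1 ▸ h.2⟩

lemma log_ancestor (i u : ℕ) (h : 1 ≤ i / 2 ^ u) :
    Nat.log 2 (i / 2 ^ u) + u = Nat.log 2 i := by
  induction u with
  | zero => simp
  | succ u ih =>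
    rw [pow_succ, ← Nat.div_div_eq_div_mul] at h ⊢
    have h2 : 2 ≤ i / 2 ^ u := by omega
    have := ih (by omega)
    have hpos := Nat.log_pos (b := 2) (by norm_num) h2
    rw [Nat.log_div_base]
    omega

lemma Common.log_eq {i k u v : ℕ} (h : Common i k u v) :
    Nat.log 2 i + v = Nat.log 2 k + u ∧ u ≤ Nat.log 2 i := by
  have h1 := log_ancestor i u h.2
  have h2 := log_ancestor k v h.symm.2
  rw [h.1] at h1
  omega

/-- If `i` and `i'` both share an ancestor with `k`, the higher of the two is common to `i`
and `i'`. -/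
lemma Common.trans {i k i' u v u' v' : ℕ} (h : Common i k u v) (h' : Common i' k u' v')
    (hv : v ≤ v') : Common i i' (u + (v' - v)) u' := by
  have e : i / 2 ^ (u + (v' - v)) = i' / 2 ^ u' := by
    rw [h'.1, pow_add, ← Nat.div_div_eq_div_mul, h.1, Nat.div_div_eq_div_mul, ← pow_add]
    congr 2
    omega
  exact ⟨e, e ▸ h'.2⟩

/-! ### Description of the order by common ancestors -/

lemma ple_down (n j : ℕ) (i d : ℕ) (hm : memP n (i, j)) (h : 1 ≤ i / 2 ^ d) :
    memP n (i / 2 ^ d, j) ∧ Ple n (i / 2 ^ d, j) (i, j) := by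
  induction d with
  | zero => exact ⟨by simpa using hm, by simpa [Ple] using Relation.ReflTransGen.refl⟩
  | succ d ih =>
    have hl := log_ancestor i (d + 1) h
    have hm' : memP n (i / 2 ^ (d + 1), j) := by
      refine ⟨h, ?_⟩
      have := hm.2
      simp only [level] at this ⊢
      omega
    refine ⟨hm', ?_⟩
    have e : i / 2 ^ (d + 1) = i / 2 ^ d / 2 := by
      rw [pow_succ, Nat.div_div_eq_div_mul]
    have ih := ih (by omega)
    refine Relation.ReflTransGen.head ⟨hm', ih.1, ?_⟩ ih.2
    simp only [e, Prod.mk.injEq, and_true]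
    omega

lemma ple_up (n j : ℕ) (i u : ℕ) (hm : memP n (i, j)) (h : 1 ≤ i / 2 ^ u) :
    memP n (i / 2 ^ u, j + u) ∧ Ple n (i, j) (i / 2 ^ u, j + u) := by
  induction u with
  | zero => exact ⟨by simpa using hm, by simpa [Ple] using Relation.ReflTransGen.refl⟩
  | succ u ih =>
    have hl := log_ancestor i (u + 1) h
    have hm' : memP n (i / 2 ^ (u + 1), j + (u + 1)) := by
      refine ⟨h, ?_⟩
      have := hm.2
      simp only [level] at this ⊢
      omega
    refine ⟨hm', ?_⟩
    have e : i / 2 ^ (u + 1) = i / 2 ^ u / 2 := by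
      rw [pow_succ, Nat.div_div_eq_div_mul]
    have ih := ih (by omega)
    refine Relation.ReflTransGen.tail ih.2 ⟨ih.1, hm', Or.inr (Or.inr ⟨?_, ?_⟩)⟩
    · simp only; omega
    · rw [e, add_assoc]

/-- Descending to the left child and climbing back raises the second coordinate by one. -/
lemma ple_zigzag (n i j e : ℕ) (hm : memP n (i, j + e)) : Ple n (i, j) (i, j + e) := by
  induction e with
  | zero => exact Relation.ReflTransGen.refl
  | succ e ih =>
    obtain ⟨h1, h2⟩ := hm
    simp only [level] at h1 h2
    have hl : Nat.log 2 (2 * i) = Nat.log 2 i + 1 := by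
      rw [mul_comm, Nat.log_mul_base (by norm_num) (by omega)]
    have ma : memP n (i, j + e) := ⟨h1, by simp only [level]; omega⟩
    have mb : memP n (2 * i, j + e) :=
      ⟨by simp only; omega, by simp only [level, hl]; omega⟩
    have mc : memP n (i, j + (e + 1)) := ⟨h1, by simp only [level]; omega⟩
    refine ((ih ma).tail ⟨ma, mb, Or.inl rfl⟩).tail ⟨mb, mc, Or.inr (Or.inr ⟨?_, ?_⟩)⟩
    · simp only; omega
    · simp only [Prod.mk.injEq]; omega

lemma ple_of_common (n : ℕ) (x y : ℕ × ℕ) (u v : ℕ) (hx : memP n x) (hy : memP n y)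
    (h : Common x.1 y.1 u v) (hu : x.2 + u ≤ y.2) : Ple n x y := by
  obtain ⟨i, j⟩ := x
  obtain ⟨k, m⟩ := y
  simp only at h hu
  have h1 := (ple_up n j i u hx h.2).2
  have h3 := ple_down n m k v hy h.symm.2
  obtain ⟨e, rfl⟩ := Nat.exists_eq_add_of_le hu
  rw [h.1] at h1
  exact (h1.trans (ple_zigzag n _ _ e h3.1)).trans h3.2

lemma common_of_ple (n : ℕ) (x y : ℕ × ℕ) (hx : memP n x) (h : Ple n x y) :
    ∃ u v, Common x.1 y.1 u v ∧ x.2 + u ≤ y.2 := by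
  induction h with
  | refl => exact ⟨0, 0, ⟨rfl, by simpa using hx.1⟩, le_rfl⟩
  | @tail y z _ hs ih =>
    obtain ⟨u, v, ⟨he, h1⟩, hu⟩ := ih
    obtain ⟨-, -, hz | hz | ⟨h2, hz⟩⟩ := hs
    · refine ⟨u, v + 1, ⟨?_, h1⟩, by rw [hz]; exact hu⟩
      rw [he, hz, pow_succ', ← Nat.div_div_eq_div_mul]
      congr 1
      simp only
      omega
    · refine ⟨u, v + 1, ⟨?_, h1⟩, by rw [hz]; exact hu⟩
      rw [he, hz, pow_succ', ← Nat.div_div_eq_div_mul]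
      congr 1
      simp only
      omega
    · cases v with
      | zero =>
        -- the path so far ends at the ancestor itself, so the climb extends the ascent from `x`
        have e : x.1 / 2 ^ (u + 1) = y.1 / 2 := by
          rw [pow_succ, ← Nat.div_div_eq_div_mul, he, pow_zero, Nat.div_one]
        refine ⟨u + 1, 0, ⟨?_, ?_⟩, ?_⟩
        · rw [e, hz, pow_zero, Nat.div_one]
        · omega
        · rw [hz]; simp only; omega
      | succ v =>
        refine ⟨u, v, ⟨?_, h1⟩, ?_⟩
        · rw [he, hz, pow_succ', ← Nat.div_div_eq_div_mul]
        · rw [hz]; simp only; omega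

lemma rho_mono (n : ℕ) (x y : ℕ × ℕ) (hx : memP n x) (h : Ple n x y) : rho x ≤ rho y := by
  obtain ⟨u, v, hc, hu⟩ := common_of_ple n x y hx h
  have := hc.log_eq
  simp only [rho, level]
  omega

/-! ### Ranks of upper and lower bounds -/

/-- Existence of the lowest common ancestor of two nodes. -/
lemma exists_lca (i k : ℕ) (hi : 1 ≤ i) (hk : 1 ≤ k) :
    ∃ p q, Common i k p q ∧ ∀ u v, Common i k u v → p ≤ u ∧ q ≤ v := by
  classical
  have one (a : ℕ) (ha : 1 ≤ a) : a / 2 ^ Nat.log 2 a = 1 := by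
    refine Nat.div_eq_of_lt_le ?_ ?_
    · simpa using Nat.pow_log_le_self 2 (by omega)
    · have := Nat.lt_pow_succ_log_self (b := 2) (by norm_num) a
      rw [pow_succ'] at this
      simpa using this
  -- the root is a common ancestor
  have hex : ∃ p q, Common i k p q :=
    ⟨Nat.log 2 i, Nat.log 2 k, by rw [one i hi, one k hk], by rw [one i hi]⟩
  obtain ⟨q, hq⟩ := Nat.find_spec hex
  refine ⟨Nat.find hex, q, hq, fun u v h => ?_⟩
  have h1 : Nat.find hex ≤ u := Nat.find_min' hex ⟨v, h⟩
  have h2 := hq.log_eq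
  have h3 := h.log_eq
  omega

/-- With `p` and `q` the heights of the lowest common ancestor above the nodes of `x` and `y`,
every upper bound of `x` and `y` has rank at least `level i + j + j' + q`. -/
lemma rho_upper_ge (n : ℕ) (x y z : ℕ × ℕ) (p q : ℕ) (hx : memP n x) (hy : memP n y)
    (hc : Common x.1 y.1 p q) (hmin : ∀ u v, Common x.1 y.1 u v → p ≤ u ∧ q ≤ v)
    (hxz : Ple n x z) (hyz : Ple n y z) :
    level x.1 + x.2 + y.2 + q ≤ rho z := by
  obtain ⟨u, v, h, hu⟩ := common_of_ple n x z hx hxz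
  obtain ⟨u', v', h', hu'⟩ := common_of_ple n y z hy hyz
  have l1 := h.log_eq
  have l2 := h'.log_eq
  have l3 := hc.log_eq
  simp only [rho, level]
  rcases le_total v v' with hv | hv
  · have := hmin _ _ (h.trans h' hv)
    omega
  · have := hmin _ _ (h'.trans h hv).symm
    omega

/-- With `p` and `q` as in `rho_upper_ge`, every lower bound of `x` and `y` has rank at most
`level i' - q + j + j'`, where `level i' - q` is the level of the lowest common ancestor. -/
lemma rho_lower_le (n : ℕ) (x y w : ℕ × ℕ) (p q : ℕ) (hw : memP n w)
    (hc : Common x.1 y.1 p q) (hmin : ∀ u v, Common x.1 y.1 u v → p ≤ u ∧ q ≤ v)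
    (hwx : Ple n w x) (hwy : Ple n w y) :
    rho w + q ≤ level y.1 + x.2 + y.2 := by
  obtain ⟨v, u, h, hu⟩ := common_of_ple n w x hw hwx
  obtain ⟨v', u', h', hu'⟩ := common_of_ple n w y hw hwy
  have l1 := h.log_eq
  have l2 := h'.log_eq
  have l3 := hc.log_eq
  simp only [rho, level]
  rcases le_total v v' with hv | hv
  · have := hmin _ _ (h.symm.trans h'.symm hv)
    omega
  · have := hmin _ _ (h'.symm.trans h.symm hv).symm
    omega

/-- When `level i + j ≥ level i' + j'` (the hypothesis `h2`), the ancestor of `i` reached by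
raising `j` to `j' + q` carries an upper bound of minimal rank: from `i'`, climb to the common
ancestor and descend. -/
lemma exists_upper (n : ℕ) (x y : ℕ × ℕ) (p q : ℕ) (hx : memP n x) (hy : memP n y)
    (hc : Common x.1 y.1 p q) (h1 : x.2 ≤ y.2 + q) (h2 : y.2 + q ≤ x.2 + p) :
    ∃ z, memP n z ∧ Ple n x z ∧ Ple n y z ∧ rho z = level x.1 + x.2 + y.2 + q := by
  obtain ⟨i, j⟩ := x
  obtain ⟨k, m⟩ := y
  simp only at hc h1 h2 ⊢
  obtain ⟨e, he⟩ := Nat.exists_eq_add_of_le h1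
  obtain ⟨f, rfl⟩ := Nat.exists_eq_add_of_le (show e ≤ p by omega)
  have hd : i / 2 ^ e / 2 ^ f = k / 2 ^ q := by
    rw [Nat.div_div_eq_div_mul, ← pow_add, hc.1]
  have hpos : 1 ≤ i / 2 ^ e :=
    (hd ▸ hc.symm.2 : 1 ≤ i / 2 ^ e / 2 ^ f).trans (Nat.div_le_self _ _)
  have hup := ple_up n j i e hx hpos
  refine ⟨_, hup.1, hup.2, ple_of_common n _ _ q f hy hup.1 ⟨hd.symm, hc.symm.2⟩ ?_, ?_⟩
  · simp only; omega
  · have := log_ancestor i e hpos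
    simp only [rho, level]
    omega

/-- When `j' ≤ j`, the ancestor of `i'` lying `j - j'` levels below the common ancestor carries,
with second coordinate `j'`, a lower bound of maximal rank. -/
lemma exists_lower (n : ℕ) (x y : ℕ × ℕ) (p q : ℕ) (hx : memP n x) (hy : memP n y)
    (hc : Common x.1 y.1 p q) (h1 : x.2 ≤ y.2 + q) (h2 : y.2 ≤ x.2) :
    ∃ w, memP n w ∧ Ple n w x ∧ Ple n w y ∧ rho w + q = level y.1 + x.2 + y.2 := by
  obtain ⟨i, j⟩ := x
  obtain ⟨k, m⟩ := y
  simp only at hc h1 h2 ⊢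
  obtain ⟨f, rfl⟩ := Nat.exists_eq_add_of_le h2
  obtain ⟨e, rfl⟩ := Nat.exists_eq_add_of_le' (show f ≤ q by omega)
  have hd : k / 2 ^ e / 2 ^ f = i / 2 ^ p := by
    rw [Nat.div_div_eq_div_mul, ← pow_add, hc.1]
  have hpos' : 1 ≤ k / 2 ^ e / 2 ^ f := hd ▸ hc.2
  have hpos : 1 ≤ k / 2 ^ e := hpos'.trans (Nat.div_le_self _ _)
  have hdn := ple_down n m k e hy hpos
  refine ⟨_, hdn.1, ple_of_common n _ _ f p hdn.1 hx ⟨hd, hpos'⟩ le_rfl, hdn.2, ?_⟩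
  have := log_ancestor k e hpos
  simp only [rho, level]
  omega

lemma modular_of_ple (n : ℕ) (x y z w : ℕ × ℕ) (hx : memP n x) (hy : memP n y)
    (hz : IsJoin n x y z) (hw : IsMeet n x y w) (h : Ple n x y) :
    rho x + rho y = rho z + rho w := by
  obtain ⟨mz, hxz, hyz, hzu⟩ := hz
  obtain ⟨mw, hwx, hwy, hwl⟩ := hw
  have a1 := rho_mono n _ _ hy hyz
  have a2 := rho_mono n _ _ mz (hzu y hy h Relation.ReflTransGen.refl)
  have a3 := rho_mono n _ _ mw hwx
  have a4 := rho_mono n _ _ hx (hwl x hx Relation.ReflTransGen.refl h)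
  omega

/-- For every `n ≥ 2`, the endgame poset `P_n` is a modular lattice: for all elements
`x, y` of `P_n`, `ρ(x) + ρ(y) = ρ(x ∨ y) + ρ(x ∧ y)`. -/
theorem stmt15 (n : ℕ) (hn : 2 ≤ n) (x y z w : ℕ × ℕ)
    (hx : memP n x) (hy : memP n y) (hz : IsJoin n x y z) (hw : IsMeet n x y w) :
    rho x + rho y = rho z + rho w := by
  by_cases hxy : Ple n x y
  · exact modular_of_ple n x y z w hx hy hz hw hxy
  by_cases hyx : Ple n y x
  · rw [add_comm]
    exact modular_of_ple n y x z w hy hx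
      ⟨hz.1, hz.2.2.1, hz.2.1, fun t ht h1 h2 => hz.2.2.2 t ht h2 h1⟩
      ⟨hw.1, hw.2.2.1, hw.2.1, fun t ht h1 h2 => hw.2.2.2 t ht h2 h1⟩ hyx
  obtain ⟨p, q, hc, hmin⟩ := exists_lca x.1 y.1 hx.1 hy.1
  have hp : y.2 < x.2 + p := by
    by_contra hcon
    exact hxy (ple_of_common n x y p q hx hy hc (by omega))
  have hq : x.2 < y.2 + q := by
    by_contra hcon
    exact hyx (ple_of_common n y x q p hy hx hc.symm (by omega))
  obtain ⟨mz, hxz, hyz, hzu⟩ := hz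
  obtain ⟨mw, hwx, hwy, hwl⟩ := hw
  have hlog := hc.log_eq
  have zge := rho_upper_ge n x y z p q hx hy hc hmin hxz hyz
  have wle := rho_lower_le n x y w p q mw hc hmin hwx hwy
  have zle : rho z ≤ level x.1 + x.2 + y.2 + q := by
    rcases le_total (y.2 + q) (x.2 + p) with h | h
    · obtain ⟨t, mt, h1, h2, h3⟩ := exists_upper n x y p q hx hy hc hq.le h
      exact (rho_mono n _ _ mz (hzu t mt h1 h2)).trans h3.le
    · obtain ⟨t, mt, h1, h2, h3⟩ := exists_upper n y x q p hy hx hc.symm hp.le h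
      have := rho_mono n _ _ mz (hzu t mt h2 h1)
      simp only [level] at h3 ⊢
      omega
  have wge : level y.1 + x.2 + y.2 ≤ rho w + q := by
    rcases le_total y.2 x.2 with h | h
    · obtain ⟨t, mt, h1, h2, h3⟩ := exists_lower n x y p q hx hy hc hq.le h
      have := rho_mono n _ _ mt (hwl t mt h1 h2)
      omega
    · obtain ⟨t, mt, h1, h2, h3⟩ := exists_lower n y x q p hy hx hc.symm hp.le h
      have := rho_mono n _ _ mt (hwl t mt h2 h1)
      simp only [level] at h3 ⊢
      omega
  have ex : rho x = level x.1 + 2 * x.2 := rfl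
  have ey : rho y = level y.1 + 2 * y.2 := rfl
  omega
end

section
/- For every n ≥ 2, the map (i, j) ↦ (i', j), where i' = 2^{level(i)} + 2^{level(i)−1} − 1 − i, is a well-defined involution of the endgame poset P_n and is an order automorphism of P_n (x ≤ y if and only if the image of x is ≤ the image of y). -/
/-- The vertical reflection `(i, j) ↦ (i', j)` with
`i' = 2^{level i} + 2^{level i − 1} − 1 − i`. -/
def phi (x : ℕ × ℕ) : ℕ × ℕ := (2 ^ level x.1 + 2 ^ (level x.1 - 1) - 1 - x.1, x.2)

/-- Every positive `i` lies in the dyadic interval of its level. -/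
theorem exists_dyadic {i : ℕ} (hi : 1 ≤ i) : ∃ m, 2 ^ m ≤ i ∧ i < 2 * 2 ^ m := by
  refine ⟨Nat.log 2 i, Nat.pow_log_le_self 2 (by omega), ?_⟩
  have h := Nat.lt_pow_succ_log_self (b := 2) (by norm_num) i
  rwa [Nat.succ_eq_add_one, pow_succ'] at h

theorem level_eq {i m : ℕ} (h1 : 2 ^ m ≤ i) (h2 : i < 2 * 2 ^ m) : level i = m + 1 := by
  rw [level, Nat.log_eq_of_pow_le_of_lt_pow h1 (by rwa [pow_succ'])]

theorem phi_eq {i m : ℕ} (j : ℕ) (h1 : 2 ^ m ≤ i) (h2 : i < 2 * 2 ^ m) :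
    phi (i, j) = (3 * 2 ^ m - 1 - i, j) := by
  simp only [phi, level_eq h1 h2, Nat.add_sub_cancel, pow_succ, Prod.mk.injEq, and_true]
  omega

theorem dyadic_reflect {i m : ℕ} (h1 : 2 ^ m ≤ i) (h2 : i < 2 * 2 ^ m) :
    2 ^ m ≤ 3 * 2 ^ m - 1 - i ∧ 3 * 2 ^ m - 1 - i < 2 * 2 ^ m := by
  omega

theorem memP_phi {n : ℕ} {x : ℕ × ℕ} (hx : memP n x) : memP n (phi x) := by
  obtain ⟨i, j⟩ := x
  obtain ⟨hi, hl⟩ := hx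
  obtain ⟨m, h1, h2⟩ := exists_dyadic hi
  obtain ⟨h3, h4⟩ := dyadic_reflect h1 h2
  have hp : 0 < 2 ^ m := by positivity
  rw [phi_eq j h1 h2]
  refine ⟨by simp only; omega, ?_⟩
  simp only [level_eq h1 h2] at hl
  simpa only [level_eq h3 h4] using hl

theorem phi_phi {x : ℕ × ℕ} (hx : 1 ≤ x.1) : phi (phi x) = x := by
  obtain ⟨i, j⟩ := x
  obtain ⟨m, h1, h2⟩ := exists_dyadic hx
  obtain ⟨h3, h4⟩ := dyadic_reflect h1 h2
  rw [phi_eq j h1 h2, phi_eq j h3 h4, Prod.mk.injEq]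
  omega

/-- The reflection preserves the generating relations, exchanging the left-child and right-child
relations and fixing the parent relation. -/
theorem covStep_phi {n : ℕ} {x y : ℕ × ℕ} (h : covStep n x y) :
    covStep n (phi x) (phi y) := by
  obtain ⟨hx, hy, h⟩ := h
  refine ⟨memP_phi hx, memP_phi hy, ?_⟩
  obtain ⟨i, j⟩ := x
  obtain ⟨m, h1, h2⟩ := exists_dyadic hx.1
  simp only at h h1 h2
  have hs : 2 ^ (m + 1) = 2 * 2 ^ m := pow_succ' 2 m
  rcases h with rfl | rfl | ⟨hi, rfl⟩
  · right; left
    rw [phi_eq j h1 h2, phi_eq (m := m + 1) j (by omega) (by omega), Prod.mk.injEq]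
    simp only [and_true]
    omega
  · left
    rw [phi_eq j h1 h2, phi_eq (m := m + 1) j (by omega) (by omega), Prod.mk.injEq]
    simp only [and_true]
    omega
  · right; right
    -- The parent lies in the preceding dyadic interval, which exists because `i ≥ 2` excludes `m = 0`.
    obtain _ | k := m
    · omega
    have hk : 2 ^ (k + 1) = 2 * 2 ^ k := pow_succ' 2 k
    have hp : 0 < 2 ^ k := by positivity
    rw [phi_eq j h1 h2, phi_eq (m := k) (j + 1) (by omega) (by omega), Prod.mk.injEq]
    simp only [and_true]
    omega

theorem Ple_phi {n : ℕ} {x y : ℕ × ℕ} (h : Ple n x y) : Ple n (phi x) (phi y) :=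
  Relation.ReflTransGen.lift (p := covStep n) phi (fun _ _ => covStep_phi) _ _ h

/-- For every `n ≥ 2`, the map `(i, j) ↦ (2^{level i} + 2^{level i − 1} − 1 − i, j)` is a
well-defined involution of `P_n` and an order automorphism of `P_n`. -/
theorem stmt16 (n : ℕ) (hn : 2 ≤ n) :
    (∀ x, memP n x → memP n (phi x)) ∧
    (∀ x, memP n x → phi (phi x) = x) ∧
    (∀ x y, memP n x → memP n y → (Ple n x y ↔ Ple n (phi x) (phi y))) := by
  refine ⟨fun x => memP_phi, fun x hx => phi_phi hx.1, fun x y hx hy => ⟨Ple_phi, fun h => ?_⟩⟩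
  have h' := Ple_phi h
  rwa [phi_phi hx.1, phi_phi hy.1] at h'
end

section
/- For every integer r > 0, the number of pairs (i, j), with i a positive integer and j ≥ 0 an integer, satisfying level(i) + 2j = r equals (2^{r+1} − 1)/3 if r is odd and (2^{r+1} − 2)/3 if r is even. (This is the number of elements of rank r in the infinite endgame poset P_∞ with rank function ρ((i, j)) = level(i) + 2j.) -/
lemma level_eq_succ_iff (i n : ℕ) :
    (1 ≤ i ∧ level i = n + 1) ↔ 2 ^ n ≤ i ∧ i < 2 ^ (n + 1) := by
  have hpos : 0 < 2 ^ n := by positivity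
  unfold level
  constructor
  · rintro ⟨hi, h⟩
    exact (Nat.log_eq_iff (Or.inr ⟨by norm_num, by omega⟩)).1 (by omega)
  · intro h
    have := (Nat.log_eq_iff (b := 2) (m := n) (n := i) (Or.inr ⟨by norm_num, by omega⟩)).2 h
    omega

/-- The pairs of rank `r` form a finite set, whose cardinality is given here without division or
subtraction; the value `r = 0` is included as a base case of the two-step induction. -/
lemma exists_rank_finset (r : ℕ) : ∃ F : Finset (ℕ × ℕ),
    (∀ p, p ∈ F ↔ 1 ≤ p.1 ∧ level p.1 + 2 * p.2 = r) ∧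
      3 * F.card + (if Odd r then 1 else 2) = 2 ^ (r + 1) := by
  induction r using Nat.twoStepInduction with
  | zero => exact ⟨∅, by simp [level], by simp⟩
  | one =>
    refine ⟨{(1, 0)}, ?_, by simp⟩
    rintro ⟨i, j⟩
    have h := level_eq_succ_iff i 0
    have hl : 1 ≤ level i := by simp [level]
    simp only [Finset.mem_singleton, Prod.mk.injEq]
    omega
  | more r ih _ =>
    obtain ⟨F, hF, hcard⟩ := ih
    have hinj : Function.Injective (fun p : ℕ × ℕ => (p.1, p.2 + 1)) := by
      rintro ⟨a, b⟩ ⟨c, d⟩ h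
      simpa using h
    have hdisj : Disjoint (Finset.Ico (2 ^ (r + 1)) (2 ^ (r + 2)) ×ˢ {0})
        (F.image fun p : ℕ × ℕ => (p.1, p.2 + 1)) := by
      rw [Finset.disjoint_left]
      rintro ⟨i, j⟩ h h'
      simp only [Finset.mem_product, Finset.mem_singleton] at h
      simp only [Finset.mem_image, Prod.mk.injEq] at h'
      obtain ⟨_, _, _, h'⟩ := h'
      omega
    refine ⟨(Finset.Ico (2 ^ (r + 1)) (2 ^ (r + 2)) ×ˢ {0}) ∪
      F.image fun p : ℕ × ℕ => (p.1, p.2 + 1), ?_, ?_⟩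
    · rintro ⟨i, j⟩
      simp only [Finset.mem_union, Finset.mem_product, Finset.mem_Ico, Finset.mem_singleton,
        Finset.mem_image, Prod.mk.injEq, Prod.exists, hF]
      rw [← level_eq_succ_iff i (r + 1)]
      constructor
      · rintro (h | ⟨a, b, h, rfl, rfl⟩) <;> omega
      · rintro ⟨hi, h⟩
        rcases j with _ | j
        · left
          omega
        · exact Or.inr ⟨i, j, ⟨hi, by omega⟩, rfl, rfl⟩
    · rw [Finset.card_union_of_disjoint hdisj, Finset.card_image_of_injective _ hinj]
      have hodd : Odd (r + 2) ↔ Odd r := by simp [Nat.odd_add]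
      simp only [Finset.card_product, Nat.card_Ico, Finset.card_singleton, hodd]
      have h2 : 2 ^ (r + 2) = 2 * 2 ^ (r + 1) := by ring
      have h3 : 2 ^ (r + 2 + 1) = 4 * 2 ^ (r + 1) := by ring
      omega

/-- For every `r > 0`, the number of elements of rank `r` in the infinite endgame poset
`P_∞`, i.e. of pairs `(i, j)` with `i ≥ 1` and `level i + 2j = r`, equals
`(2^{r+1} − 1)/3` if `r` is odd and `(2^{r+1} − 2)/3` if `r` is even. -/
theorem stmt18 (r : ℕ) (hr : 0 < r) :
    {p : ℕ × ℕ | 1 ≤ p.1 ∧ level p.1 + 2 * p.2 = r}.ncard =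
      if Odd r then (2 ^ (r + 1) - 1) / 3 else (2 ^ (r + 1) - 2) / 3 := by
  obtain ⟨F, hF, hcard⟩ := exists_rank_finset r
  have hS : {p : ℕ × ℕ | 1 ≤ p.1 ∧ level p.1 + 2 * p.2 = r} = (F : Set (ℕ × ℕ)) := by
    ext p
    simp [hF]
  rw [hS, Set.ncard_coe_finset]
  split_ifs at hcard ⊢ <;> omega
end
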